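/- arXiv:1903.07228 — 3 statements merged into one kernel-verified Lean document; each statement's English description precedes it below -/
import Mathlib

section
/- Convergence of quasi-stochastic approximation (Theorem 1). Suppose Assumptions (A1)–(A5) hold, that sup_{t≥0} ‖f(0, ξ(t))‖ < ∞, and that θ : [0,∞) → ℝ^d is a continuously differentiable solution of the QSA ODE dθ/dt(t) = a(t)·f(θ(t), ξ(t)) for t ≥ 0. Then θ(t) → θ* as t → ∞, for every initial condition θ(0). -/
open intervalIntegral Filter

/-!
Run on the clock `g t = ∫₀ᵗ a`, the averaged equation has unit speed. Over a time window of length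
`ℓ = 1 / √(a s)` starting after time `s`, the forcing averages out, since `ℓ → ∞`, whereas `a` and
`θ` barely move, since `a s * ℓ = √(a s) → 0`. Summing over the windows covered by a bounded amount
of clock time and applying Grönwall's inequality, `θ` stays within `O(√(a s)) * (1 + ‖θ s‖)` of the
averaged flow started from `θ s`: it is an asymptotic pseudotrajectory. The error being relative to
`‖θ s‖`, the drift `-‖θ s‖` of the Lyapunov function absorbs it, which bounds `θ`; uniform
attraction of the averaged flow on bounded sets then gives convergence.
-/

section

open MeasureTheory Set Topology
open scoped NNReal BoundedContinuousFunction

variable {E : Type*} [NormedAddCommGroup E] [NormedSpace ℝ E]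

/-! ### Grönwall inequalities after a change of time -/

theorem norm_le_gronwallBound_comp {y y' : ℝ → E} {a g : ℝ → ℝ} {K ε s t : ℝ} (hst : s ≤ t)
    (hy : ContinuousOn y (Icc s t))
    (hy' : ∀ u ∈ Ico s t, HasDerivWithinAt y (y' u) (Ici u) u)
    (hg : ContinuousOn g (Icc s t))
    (hg' : ∀ u ∈ Ico s t, HasDerivWithinAt g (a u) (Ici u) u)
    (ha : ∀ u ∈ Ico s t, 0 < a u)
    (bound : ∀ u ∈ Ico s t, ‖y' u‖ ≤ a u * (K * ‖y u‖ + ε)) :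
    ‖y t‖ ≤ gronwallBound ‖y s‖ K ε (g t - g s) := by
  have h_strict : ∀ ε' ∈ Ioi ε, ‖y t‖ ≤ gronwallBound ‖y s‖ K ε' (g t - g s) := by
    intro ε' hε'
    have hB (x : ℝ) := hasDerivAt_gronwallBound ‖y s‖ K ε' x
    refine image_norm_le_of_norm_deriv_right_lt_deriv_boundary' hy hy'
      (B := fun u ↦ gronwallBound ‖y s‖ K ε' (g u - g s)) (by simp [gronwallBound_x0])
      (fun u hu ↦ (hB _).continuousAt.comp_continuousWithinAt ((hg u hu).sub_const _))
      (fun u hu ↦ (hB _).comp_hasDerivWithinAt u ((hg' u hu).sub_const _))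
      (fun u hu hyu ↦ ?_) (right_mem_Icc.2 hst)
    rw [← hyu, mul_comm _ (a u)]
    exact (bound u hu).trans_lt (mul_lt_mul_of_pos_left (add_lt_add_right hε' _) (ha u hu))
  exact ge_of_tendsto ((gronwallBound_continuous_ε _ _ _).continuousWithinAt (s := Ioi ε))
    (eventually_mem_nhdsWithin.mono h_strict)

theorem gronwallBound_mul (δ K η x : ℝ) :
    gronwallBound δ K (K * η) x = (δ + η) * Real.exp (K * x) - η := by
  rcases eq_or_ne K 0 with rfl | hK
  · simp [gronwallBound_K0]
  · rw [gronwallBound_of_K_ne_0 hK, mul_div_cancel_left₀ η hK]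
    ring

theorem norm_add_le_mul_exp_comp {y y' : ℝ → E} {a g : ℝ → ℝ} {K η s t : ℝ} (hst : s ≤ t)
    (hy : ContinuousOn y (Icc s t))
    (hy' : ∀ u ∈ Ico s t, HasDerivWithinAt y (y' u) (Ici u) u)
    (hg : ContinuousOn g (Icc s t))
    (hg' : ∀ u ∈ Ico s t, HasDerivWithinAt g (a u) (Ici u) u)
    (ha : ∀ u ∈ Ico s t, 0 < a u)
    (bound : ∀ u ∈ Ico s t, ‖y' u‖ ≤ a u * (K * (‖y u‖ + η))) :
    ‖y t‖ + η ≤ (‖y s‖ + η) * Real.exp (K * (g t - g s)) := by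
  have h := norm_le_gronwallBound_comp hst hy hy' hg hg' ha
    fun u hu ↦ (bound u hu).trans_eq (by rw [mul_add])
  rw [gronwallBound_mul] at h
  linarith

theorem hasDerivWithinAt_integral_of_continuousOn_Ici [CompleteSpace E] {φ : ℝ → E} {c s u : ℝ}
    (hφ : ContinuousOn φ (Ici c)) (hs : c ≤ s) (hu : c ≤ u) :
    HasDerivWithinAt (fun u ↦ ∫ r in s..u, φ r) (φ u) (Ici c) u := by
  have h_cont : Continuous fun r ↦ φ (max c r) :=
    hφ.comp_continuous (by fun_prop) fun r ↦ le_max_left c r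
  have h_eq (x : ℝ) (hx : x ∈ Ici c) : ∫ r in s..x, φ r = ∫ r in s..x, φ (max c r) :=
    integral_congr fun r hr ↦ by
      rw [max_eq_right (ordConnected_Ici.uIcc_subset hs hx hr : c ≤ r)]
  have h_deriv := (h_cont.integral_hasStrictDerivAt s u).hasDerivAt.hasDerivWithinAt (s := Ici c)
  rw [max_eq_right hu] at h_deriv
  exact h_deriv.congr h_eq (h_eq u hu)

/-! ### Global solutions of Lipschitz equations -/

theorem norm_integral_le_of_norm_le_mul_exp_abs {φ : ℝ → E} {C k : ℝ} (hk : 0 < k)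
    (hφ : ∀ s, ‖φ s‖ ≤ C * Real.exp (k * |s|)) (t : ℝ) :
    ‖∫ s in (0 : ℝ)..t, φ s‖ ≤ C / k * Real.exp (k * |t|) := by
  wlog ht : 0 ≤ t generalizing φ t
  · have h_neg := this (φ := fun s ↦ φ (-s)) (fun s ↦ by simpa using hφ (-s)) (-t)
      (by linarith)
    rwa [intervalIntegral.integral_comp_neg, neg_neg, neg_zero, integral_symm, norm_neg,
      abs_neg] at h_neg
  have hC : 0 ≤ C := (norm_nonneg _).trans (by simpa using hφ 0)
  rw [abs_of_nonneg ht]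
  calc ‖∫ s in (0 : ℝ)..t, φ s‖ ≤ ∫ s in (0 : ℝ)..t, C * Real.exp (k * s) :=
        norm_integral_le_of_norm_le ht
          (.of_forall fun s hs ↦ by simpa only [abs_of_pos hs.1] using hφ s)
          (Continuous.intervalIntegrable (by fun_prop) _ _)
    _ = C / k * (Real.exp (k * t) - 1) := by
        rw [intervalIntegral.integral_const_mul, intervalIntegral.integral_comp_mul_left _ hk.ne']
        simp [div_eq_mul_inv, mul_assoc]
    _ ≤ C / k * Real.exp (k * t) := by gcongr; linarith

/-- The Picard operator `χ ↦ x₀ + ∫₀ᵗ v (χ s) ds` of the autonomous equation `χ' = v χ`, written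
in the unknown `u t = exp (-k |t|) • (χ t - x₀)`: for `k` larger than the Lipschitz constant of `v`
it contracts the space of bounded continuous functions on the whole line. -/
noncomputable def rescaledPicard (v : E → E) (x₀ : E) (k : ℝ) (u : ℝ → E) (t : ℝ) : E :=
  Real.exp (-(k * |t|)) • ∫ s in (0 : ℝ)..t, v (x₀ + Real.exp (k * |s|) • u s)

section rescaledPicard

variable {v : E → E} {K : ℝ≥0} {k : ℝ} {u w : ℝ → E}

theorem continuous_rescaledPicard (hv : Continuous v) (hu : Continuous u) (x₀ : E) (k : ℝ) :
    Continuous (rescaledPicard v x₀ k u) := by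
  have h_int : Continuous fun t ↦ ∫ s in (0 : ℝ)..t, v (x₀ + Real.exp (k * |s|) • u s) :=
    continuous_primitive (fun _ _ ↦ Continuous.intervalIntegrable (by fun_prop) _ _) 0
  have h_exp : Continuous fun t ↦ Real.exp (-(k * |t|)) := by fun_prop
  exact h_exp.smul h_int

theorem norm_exp_neg_smul_integral_le {φ : ℝ → E} {C : ℝ} (hk : 0 < k)
    (hφ : ∀ s, ‖φ s‖ ≤ C * Real.exp (k * |s|)) (t : ℝ) :
    ‖Real.exp (-(k * |t|)) • ∫ s in (0 : ℝ)..t, φ s‖ ≤ C / k := by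
  rw [norm_smul, Real.norm_eq_abs, Real.abs_exp, Real.exp_neg, inv_mul_le_iff₀ (Real.exp_pos _),
    mul_comm]
  exact norm_integral_le_of_norm_le_mul_exp_abs hk hφ t

theorem norm_rescaledPicard_sub_le (hv : LipschitzWith K v) (hk : 0 < k) (x₀ : E)
    (hu : Continuous u) (hw : Continuous w) {C : ℝ} (hC : ∀ s, ‖u s - w s‖ ≤ C) (t : ℝ) :
    ‖rescaledPicard v x₀ k u t - rescaledPicard v x₀ k w t‖ ≤ K * C / k := by
  have hvc := hv.continuous
  rw [rescaledPicard, rescaledPicard, ← smul_sub, ← intervalIntegral.integral_sub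
    (Continuous.intervalIntegrable (by fun_prop) _ _)
    (Continuous.intervalIntegrable (by fun_prop) _ _)]
  refine norm_exp_neg_smul_integral_le hk (fun s ↦ ?_) t
  calc ‖v (x₀ + Real.exp (k * |s|) • u s) - v (x₀ + Real.exp (k * |s|) • w s)‖
      ≤ K * ‖Real.exp (k * |s|) • (u s - w s)‖ := by
        simpa [smul_sub] using
          hv.norm_sub_le (x₀ + Real.exp (k * |s|) • u s) (x₀ + Real.exp (k * |s|) • w s)
    _ = K * ‖u s - w s‖ * Real.exp (k * |s|) := by
        rw [norm_smul, Real.norm_eq_abs, Real.abs_exp]; ring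
    _ ≤ K * C * Real.exp (k * |s|) := by gcongr; exact hC s

theorem norm_rescaledPicard_le (hv : LipschitzWith K v) (hk : 0 < k) (x₀ : E) {C : ℝ}
    (hC : ∀ s, ‖u s‖ ≤ C) (hu : Continuous u) (t : ℝ) :
    ‖rescaledPicard v x₀ k u t‖ ≤ (K * C + ‖v x₀‖) / k := by
  have h_sub := norm_rescaledPicard_sub_le hv hk x₀ hu continuous_const (w := fun _ ↦ 0)
    (by simpa using hC) t
  have h_zero : ‖rescaledPicard v x₀ k (fun _ ↦ 0) t‖ ≤ ‖v x₀‖ / k :=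
    norm_exp_neg_smul_integral_le hk (fun s ↦ by
      simpa using le_mul_of_one_le_right (norm_nonneg (v x₀)) (Real.one_le_exp (by positivity))) t
  rw [add_div]
  linarith [norm_le_norm_sub_add (rescaledPicard v x₀ k u t) (rescaledPicard v x₀ k (fun _ ↦ 0) t)]

theorem exists_rescaledPicard_eq_self [CompleteSpace E] (hv : LipschitzWith K v) (x₀ : E) :
    ∃ u : ℝ →ᵇ E, rescaledPicard v x₀ (K + 1) u = u := by
  have hk : (0 : ℝ) < K + 1 := by positivity
  let Φ (u : ℝ →ᵇ E) : ℝ →ᵇ E := .ofNormedAddCommGroup (rescaledPicard v x₀ (K + 1) u)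
    (continuous_rescaledPicard hv.continuous u.continuous x₀ _) _
    (norm_rescaledPicard_le hv hk x₀ u.norm_coe_le_norm u.continuous)
  have hΦ : ContractingWith (K / (K + 1)) Φ := by
    refine ⟨by rw [div_lt_one (by positivity)]; exact lt_add_one K, .of_dist_le_mul fun u w ↦ ?_⟩
    refine (BoundedContinuousFunction.dist_le (by positivity)).2 fun t ↦ ?_
    have h := norm_rescaledPicard_sub_le hv hk x₀ u.continuous w.continuous
      (fun s ↦ by rw [← dist_eq_norm]; exact BoundedContinuousFunction.dist_coe_le_dist s) t
    rw [← dist_eq_norm] at h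
    exact h.trans_eq (by push_cast; ring)
  exact ⟨_, congrArg DFunLike.coe hΦ.fixedPoint_isFixedPt⟩

end rescaledPicard

theorem exists_isIntegralCurve_of_lipschitzWith [CompleteSpace E] {v : E → E} {K : ℝ≥0}
    (hv : LipschitzWith K v) (x₀ : E) :
    ∃ χ : ℝ → E, χ 0 = x₀ ∧ IsIntegralCurve χ fun _ ↦ v := by
  obtain ⟨u, hu⟩ := exists_rescaledPicard_eq_self hv x₀
  let χ (t : ℝ) : E := x₀ + Real.exp ((K + 1) * |t|) • u t
  have hχ_int : χ = fun t ↦ x₀ + ∫ s in (0 : ℝ)..t, v (χ s) := by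
    funext t
    simp only [χ]
    conv_lhs => rw [← congrFun hu t, rescaledPicard, smul_smul, ← Real.exp_add, add_neg_cancel,
      Real.exp_zero, one_smul]
  have hvχ : Continuous fun t ↦ v (χ t) := by
    have := hv.continuous
    fun_prop
  refine ⟨χ, by rw [hχ_int]; simp, fun t ↦ ?_⟩
  have h := ((hvχ.integral_hasStrictDerivAt 0 t).hasDerivAt).const_add x₀
  rwa [← hχ_int] at h

/-! ### Gains and their clocks -/

/-- The gain process of a stochastic approximation scheme: positive, continuous, nonincreasing and
vanishing on `[0, ∞)`, with infinite total mass. Its values at negative times are irrelevant. -/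
structure IsGain (a : ℝ → ℝ) : Prop where
  pos : ∀ t, 0 ≤ t → 0 < a t
  continuousOn : ContinuousOn a (Ici 0)
  antitoneOn : AntitoneOn a (Ici 0)
  tendsto_zero : Tendsto a atTop (𝓝 0)
  tendsto_integral : Tendsto (fun t ↦ ∫ r in (0 : ℝ)..t, a r) atTop atTop

/-- The algorithmic time `g t = ∫₀ᵗ a`, in which the averaged equation runs at unit speed. -/
noncomputable def clock (a : ℝ → ℝ) (t : ℝ) : ℝ := ∫ r in (0 : ℝ)..t, a r

namespace IsGain

variable {a : ℝ → ℝ} {s t : ℝ}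

theorem hasDerivWithinAt_clock (ha : IsGain a) (ht : 0 ≤ t) :
    HasDerivWithinAt (clock a) (a t) (Ici 0) t :=
  hasDerivWithinAt_integral_of_continuousOn_Ici ha.continuousOn le_rfl ht

theorem continuousOn_clock (ha : IsGain a) : ContinuousOn (clock a) (Ici 0) :=
  fun _ ht ↦ (ha.hasDerivWithinAt_clock ht).continuousWithinAt

theorem intervalIntegrable (ha : IsGain a) (hs : 0 ≤ s) (ht : 0 ≤ t) :
    IntervalIntegrable a volume s t :=
  (ha.continuousOn.mono (ordConnected_Ici.uIcc_subset hs ht)).intervalIntegrable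

theorem clock_sub_clock (ha : IsGain a) (hs : 0 ≤ s) (ht : 0 ≤ t) :
    clock a t - clock a s = ∫ r in s..t, a r :=
  integral_interval_sub_left (ha.intervalIntegrable le_rfl ht) (ha.intervalIntegrable le_rfl hs)

theorem strictMonoOn_clock (ha : IsGain a) : StrictMonoOn (clock a) (Ici 0) := by
  intro s hs t ht hst
  rw [← sub_pos, ha.clock_sub_clock hs ht]
  exact intervalIntegral_pos_of_pos_on (ha.intervalIntegrable hs ht)
    (fun r hr ↦ ha.pos r (hs.trans hr.1.le)) hst

theorem tendsto_clock (ha : IsGain a) : Tendsto (clock a) atTop atTop :=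
  ha.tendsto_integral

end IsGain

/-! ### Averaging over windows -/

theorem dist_le_of_dist_window_le {α : Type*} [PseudoMetricSpace α] {y : ℝ → α} {φ : ℝ → ℝ}
    {c ℓ s u : ℝ} (hℓ : 0 < ℓ)
    (h_first : ∀ q, s ≤ q → q ≤ s + ℓ → q ≤ u → dist (y s) (y q) ≤ c + (φ q - φ s))
    (h_window : ∀ p, s ≤ p → p + ℓ ≤ u → dist (y p) (y (p + ℓ)) ≤ φ (p + ℓ) - φ p)
    (hsu : s ≤ u) : dist (y s) (y u) ≤ c + (φ u - φ s) := by
  suffices h : ∀ n : ℕ, ∀ q, s ≤ q → q ≤ u → q ≤ s + n * ℓ →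
      dist (y s) (y q) ≤ c + (φ q - φ s) by
    obtain ⟨n, hn⟩ := exists_nat_ge ((u - s) / ℓ)
    exact h n u hsu le_rfl (by linarith [(div_le_iff₀ hℓ).1 hn])
  intro n
  induction n with
  | zero => exact fun q hsq hqu hq ↦ h_first q hsq (by push_cast at hq; linarith) hqu
  | succ n ih =>
    intro q hsq hqu hq
    rcases le_total q (s + ℓ) with h | h
    · exact h_first q hsq h hqu
    · have h_prev := ih (q - ℓ) (by linarith) (by linarith) (by push_cast at hq; linarith)
      have h_last := h_window (q - ℓ) (by linarith) (by linarith)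
      rw [sub_add_cancel] at h_last
      linarith [dist_triangle (y s) (y (q - ℓ)) (y q)]

theorem intervalIntegrable_of_le_of_le {F : Type*} [NormedAddCommGroup F] {f : ℝ → F}
    {s p q u : ℝ} (hf : IntervalIntegrable f volume s u) (hsp : s ≤ p) (hpq : p ≤ q)
    (hqu : q ≤ u) : IntervalIntegrable f volume p q :=
  hf.mono_set (by
    rw [uIcc_of_le hpq, uIcc_of_le (hsp.trans (hpq.trans hqu))]
    exact Icc_subset_Icc hsp hqu)

theorem integral_sub_integral_of_le {f : ℝ → E} {s p q u : ℝ}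
    (hf : IntervalIntegrable f volume s u) (hsp : s ≤ p) (hpq : p ≤ q) (hqu : q ≤ u) :
    (∫ r in s..q, f r) - ∫ r in s..p, f r = ∫ r in p..q, f r :=
  integral_interval_sub_left (intervalIntegrable_of_le_of_le hf le_rfl (hsp.trans hpq) hqu)
    (intervalIntegrable_of_le_of_le hf le_rfl hsp (hpq.trans hqu))

theorem intervalIntegrable_of_antitoneOn_Icc {a : ℝ → ℝ} {p q : ℝ} (hpq : p ≤ q)
    (ha : AntitoneOn a (Icc p q)) : IntervalIntegrable a volume p q := by
  rw [← uIcc_of_le hpq] at ha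
  exact ha.intervalIntegrable

theorem sub_mul_le_integral_of_antitoneOn {a : ℝ → ℝ} {p q : ℝ} (hpq : p ≤ q)
    (ha : AntitoneOn a (Icc p q)) : (q - p) * a q ≤ ∫ r in p..q, a r := by
  simpa using intervalIntegral.integral_mono_on hpq intervalIntegrable_const
    (intervalIntegrable_of_antitoneOn_Icc hpq ha) fun r hr ↦ ha hr (right_mem_Icc.2 hpq) hr.2

section Antitone

variable {φ ψ : ℝ → E} {a : ℝ → ℝ} {B D M p q : ℝ}

theorem norm_integral_smul_sub_smul_le_of_antitoneOn (hpq : p ≤ q)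
    (ha : AntitoneOn a (Icc p q)) (haq : 0 ≤ a q) (hφ : ∀ r ∈ Icc p q, ‖φ r‖ ≤ B)
    (hψ : ∀ r ∈ Icc p q, ‖ψ r - φ r‖ ≤ D) :
    ‖∫ r in p..q, (a r • ψ r - a p • φ r)‖ ≤
      B * (q - p) * (a p - a q) + D * ∫ r in p..q, a r := by
  have h_int := intervalIntegrable_of_antitoneOn_Icc hpq ha
  have h_pointwise (r : ℝ) (hr : r ∈ Icc p q) :
      ‖a r • ψ r - a p • φ r‖ ≤ B * (a p - a q) + D * a r := by
    have haqr := ha hr (right_mem_Icc.2 hpq) hr.2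
    have harp := ha (left_mem_Icc.2 hpq) hr hr.1
    calc ‖a r • ψ r - a p • φ r‖ = ‖a r • (ψ r - φ r) - (a p - a r) • φ r‖ := by
          congr 1; module
      _ ≤ ‖a r • (ψ r - φ r)‖ + ‖(a p - a r) • φ r‖ := norm_sub_le _ _
      _ ≤ a r * D + (a p - a q) * B := by
          rw [norm_smul, norm_smul, Real.norm_of_nonneg (haq.trans haqr),
            Real.norm_of_nonneg (sub_nonneg.2 harp)]
          gcongr
          exacts [haq.trans haqr, hψ r hr, sub_nonneg.2 (haqr.trans harp), hφ r hr]
      _ = B * (a p - a q) + D * a r := by ring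
  calc ‖∫ r in p..q, (a r • ψ r - a p • φ r)‖ ≤ ∫ r in p..q, (B * (a p - a q) + D * a r) :=
        norm_integral_le_of_norm_le hpq
          (.of_forall fun r hr ↦ h_pointwise r (Ioc_subset_Icc_self hr))
          (intervalIntegrable_const.add (h_int.const_mul D))
    _ = B * (q - p) * (a p - a q) + D * ∫ r in p..q, a r := by
        rw [intervalIntegral.integral_add intervalIntegrable_const (h_int.const_mul D),
          intervalIntegral.integral_const, intervalIntegral.integral_const_mul, smul_eq_mul]
        ring

theorem norm_integral_smul_le_of_antitoneOn (hpq : p ≤ q) (ha : AntitoneOn a (Icc p q))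
    (haq : 0 ≤ a q) (hφ_int : IntervalIntegrable φ volume p q)
    (hψ_int : IntervalIntegrable (fun r ↦ a r • ψ r) volume p q)
    (hφ : ∀ r ∈ Icc p q, ‖φ r‖ ≤ B) (hφM : ‖∫ r in p..q, φ r‖ ≤ M)
    (hψ : ∀ r ∈ Icc p q, ‖ψ r - φ r‖ ≤ D) :
    ‖∫ r in p..q, a r • ψ r‖ ≤ M * a p + B * (q - p) * (a p - a q) + D * ∫ r in p..q, a r := by
  have hap : 0 ≤ a p := haq.trans (ha (left_mem_Icc.2 hpq) (right_mem_Icc.2 hpq) hpq)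
  have h_split : ∫ r in p..q, a r • ψ r =
      a p • (∫ r in p..q, φ r) + ∫ r in p..q, (a r • ψ r - a p • φ r) := by
    have hφ_smul : IntervalIntegrable (fun r ↦ a p • φ r) volume p q := hφ_int.smul (a p)
    rw [intervalIntegral.integral_sub hψ_int hφ_smul, intervalIntegral.integral_smul]
    abel
  have h_main : ‖a p • ∫ r in p..q, φ r‖ ≤ M * a p := by
    rw [norm_smul, Real.norm_of_nonneg hap, mul_comm]
    gcongr
  rw [h_split, add_assoc]
  exact norm_add_le_of_le h_main (norm_integral_smul_sub_smul_le_of_antitoneOn hpq ha haq hφ hψ)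

-- The boundary terms `B * a p` are absorbed by `g`, since `ℓ * a (p + ℓ) ≤ g (p + ℓ) - g p`.
theorem dist_le_of_dist_window_le_of_antitoneOn {α : Type*} [PseudoMetricSpace α] {y : ℝ → α}
    {g : ℝ → ℝ} {ℓ s u : ℝ} (hℓ : 0 < ℓ) (hsu : s ≤ u) (ha : AntitoneOn a (Icc s u))
    (hau : 0 ≤ a u) (hB : 0 ≤ B)
    (hg : ∀ p q, s ≤ p → p ≤ q → q ≤ u → (q - p) * a q ≤ g q - g p)
    (h_window : ∀ p q, s ≤ p → p ≤ q → q ≤ p + ℓ → q ≤ u →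
      dist (y p) (y q) ≤ B * a p + B * ℓ * (a p - a q) + D * (g q - g p)) :
    dist (y s) (y u) ≤ B * (ℓ + 2) * a s + (B / ℓ + D) * (g u - g s) := by
  let φ (q : ℝ) : ℝ := (B / ℓ + D) * g q - B * (ℓ + 1) * a q
  have h_first (q : ℝ) (hsq : s ≤ q) (hqs : q ≤ s + ℓ) (hqu : q ≤ u) :
      dist (y s) (y q) ≤ B * a s + (φ q - φ s) := by
    have haq : 0 ≤ a q := hau.trans (ha ⟨hsq, hqu⟩ (right_mem_Icc.2 hsu) hqu)
    have haqs : 0 ≤ B * (a s - a q) :=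
      mul_nonneg hB (sub_nonneg.2 (ha (left_mem_Icc.2 hsu) ⟨hsq, hqu⟩ hsq))
    have hgq : 0 ≤ B / ℓ * (g q - g s) :=
      mul_nonneg (by positivity) ((mul_nonneg (sub_nonneg.2 hsq) haq).trans (hg s q le_rfl hsq hqu))
    linear_combination h_window s q le_rfl hsq hqs hqu + haqs + hgq
  have h_full (p : ℝ) (hsp : s ≤ p) (hpu : p + ℓ ≤ u) :
      dist (y p) (y (p + ℓ)) ≤ φ (p + ℓ) - φ p := by
    have hpℓ : p ≤ p + ℓ := by linarith
    have h_absorb : B * a (p + ℓ) ≤ B / ℓ * (g (p + ℓ) - g p) :=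
      calc B * a (p + ℓ) = B / ℓ * ((p + ℓ - p) * a (p + ℓ)) := by field_simp; ring
        _ ≤ B / ℓ * (g (p + ℓ) - g p) := by gcongr; exact hg p (p + ℓ) hsp hpℓ hpu
    linear_combination h_window p (p + ℓ) hsp hpℓ le_rfl hpu + h_absorb
  have h_end : 0 ≤ B * (ℓ + 1) * a u := by positivity
  linear_combination dist_le_of_dist_window_le hℓ h_first h_full hsu + h_end

theorem norm_integral_smul_diag_le_of_antitoneOn {h : ℝ → ℝ → E} {ℓ s u : ℝ} (hℓ : 0 < ℓ)
    (hsu : s ≤ u) (ha : AntitoneOn a (Icc s u)) (hau : 0 ≤ a u)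
    (h_int : ∀ p q, s ≤ p → p ≤ q → q ≤ u → IntervalIntegrable (h p) volume p q)
    (h_diag_int : IntervalIntegrable (fun r ↦ a r • h r r) volume s u)
    (h_norm : ∀ p r, s ≤ p → p ≤ r → r ≤ u → ‖h p r‖ ≤ B)
    (h_int_norm : ∀ p q, s ≤ p → p ≤ q → q ≤ u → ‖∫ r in p..q, h p r‖ ≤ B)
    (h_diag : ∀ p r, s ≤ p → p ≤ r → r ≤ p + ℓ → r ≤ u → ‖h r r - h p r‖ ≤ D) :
    ‖∫ r in s..u, a r • h r r‖ ≤ B * (ℓ + 2) * a s + (B / ℓ + D) * ∫ r in s..u, a r := by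
  have hB : 0 ≤ B := (norm_nonneg _).trans (h_norm s s le_rfl le_rfl hsu)
  have ha_int := intervalIntegrable_of_antitoneOn_Icc hsu ha
  have key := dist_le_of_dist_window_le_of_antitoneOn (y := fun q ↦ ∫ r in s..q, a r • h r r)
    (g := fun q ↦ ∫ r in s..q, a r) (B := B) (D := D) hℓ hsu ha hau hB
    (fun p q hsp hpq hqu ↦ ?_) (fun p q hsp hpq hqp hqu ↦ ?_)
  · simpa using key
  · rw [integral_sub_integral_of_le ha_int hsp hpq hqu]
    exact sub_mul_le_integral_of_antitoneOn hpq (ha.mono (Icc_subset_Icc hsp hqu))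
  · rw [dist_comm, dist_eq_norm, integral_sub_integral_of_le h_diag_int hsp hpq hqu,
      integral_sub_integral_of_le ha_int hsp hpq hqu]
    have ha_pq : AntitoneOn a (Icc p q) := ha.mono (Icc_subset_Icc hsp hqu)
    have haq : a u ≤ a q := ha ⟨hsp.trans hpq, hqu⟩ (right_mem_Icc.2 hsu) hqu
    have hapq : a q ≤ a p := ha_pq (left_mem_Icc.2 hpq) (right_mem_Icc.2 hpq) hpq
    refine (norm_integral_smul_le_of_antitoneOn hpq ha_pq (hau.trans haq) (h_int p q hsp hpq hqu)
      (intervalIntegrable_of_le_of_le h_diag_int hsp hpq hqu)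
      (fun r hr ↦ h_norm p r hsp hr.1 (hr.2.trans hqu)) (h_int_norm p q hsp hpq hqu)
      fun r hr ↦ h_diag p r hsp hr.1 (hr.2.trans hqp) (hr.2.trans hqu)).trans ?_
    gcongr
    linarith

end Antitone

/-! ### Tracking of the averaged flow -/

theorem norm_le_mul_one_add_norm_of_lipschitzWith {F G : Type*} [NormedAddCommGroup F]
    [NormedAddCommGroup G] {f : F → G} {K : ℝ≥0} (hf : LipschitzWith K f)
    (hf₀ : ‖f 0‖ ≤ K) (x : F) : ‖f x‖ ≤ K * (1 + ‖x‖) := by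
  have h := hf.norm_sub_le x 0
  rw [sub_zero] at h
  linarith [norm_le_norm_sub_add (f x) (f 0)]

theorem intervalIntegrable_of_hasDerivAt_of_norm_le [CompleteSpace E] {y y' : ℝ → E} {C s t : ℝ}
    (hst : s ≤ t) (hy : ∀ u ∈ Ioo s t, HasDerivAt y (y' u) u) (hC : ∀ u ∈ Ioo s t, ‖y' u‖ ≤ C) :
    IntervalIntegrable y' volume s t := by
  rw [intervalIntegrable_iff_integrableOn_Ioo_of_le hst]
  have h_eq : EqOn (deriv y) y' (Ioo s t) := fun u hu ↦ (hy u hu).deriv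
  refine IntegrableOn.congr_fun ?_ h_eq measurableSet_Ioo
  exact .of_bound measure_Ioo_lt_top (aestronglyMeasurable_deriv y _) C
    (ae_restrict_of_forall_mem measurableSet_Ioo fun u hu ↦ (h_eq hu).symm ▸ hC u hu)

/-- Quantitative averaging of a time-dependent vector field `F` to an autonomous one `v`: both have
linear growth and Lipschitz constant `K`, and the accumulated averaging error `∫₀ᵀ (F t x - v x) dt`
stays bounded in `T`. -/
structure AveragingBounds (F : ℝ → E → E) (v : E → E) (K : ℝ≥0) : Prop where
  lipschitzWith : ∀ t, 0 ≤ t → LipschitzWith K (F t)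
  lipschitzWith_avg : LipschitzWith K v
  norm_le : ∀ t, 0 ≤ t → ∀ x, ‖F t x‖ ≤ K * (1 + ‖x‖)
  norm_avg_le : ∀ x, ‖v x‖ ≤ K * (1 + ‖x‖)
  intervalIntegrable : ∀ x T, 0 ≤ T → IntervalIntegrable (fun t ↦ F t x) volume 0 T
  norm_integral_sub_le : ∀ x T, 0 ≤ T → ‖∫ t in (0 : ℝ)..T, (F t x - v x)‖ ≤ K * (1 + ‖x‖)

namespace AveragingBounds

variable {F : ℝ → E → E} {v : E → E} {K : ℝ≥0} {p q t : ℝ}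

theorem norm_sub_avg_le (h : AveragingBounds F v K) (ht : 0 ≤ t) (x : E) :
    ‖F t x - v x‖ ≤ 2 * K * (1 + ‖x‖) := by
  linarith [norm_sub_le (F t x) (v x), h.norm_le t ht x, h.norm_avg_le x]

theorem norm_sub_avg_sub_le (h : AveragingBounds F v K) (ht : 0 ≤ t) (x y : E) :
    ‖(F t x - v x) - (F t y - v y)‖ ≤ 2 * K * ‖x - y‖ := by
  rw [sub_sub_sub_comm]
  linarith [norm_sub_le (F t x - F t y) (v x - v y), (h.lipschitzWith t ht).norm_sub_le x y,
    h.lipschitzWith_avg.norm_sub_le x y]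

theorem intervalIntegrable_sub_avg (h : AveragingBounds F v K) (hp : 0 ≤ p) (hq : 0 ≤ q) (x : E) :
    IntervalIntegrable (fun t ↦ F t x - v x) volume p q :=
  ((h.intervalIntegrable x p hp).symm.trans (h.intervalIntegrable x q hq)).sub
    intervalIntegrable_const

theorem norm_integral_sub_avg_le (h : AveragingBounds F v K) (hp : 0 ≤ p) (hq : 0 ≤ q) (x : E) :
    ‖∫ t in p..q, (F t x - v x)‖ ≤ 2 * K * (1 + ‖x‖) := by
  rw [← integral_interval_sub_left (h.intervalIntegrable_sub_avg le_rfl hq x)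
    (h.intervalIntegrable_sub_avg le_rfl hp x)]
  linarith [norm_sub_le (∫ t in (0 : ℝ)..q, (F t x - v x)) (∫ t in (0 : ℝ)..p, (F t x - v x)),
    h.norm_integral_sub_le x p hp, h.norm_integral_sub_le x q hq]

end AveragingBounds

namespace IsGain

variable {F : ℝ → E → E} {a : ℝ → ℝ} {θ : ℝ → E} {K R s t : ℝ}

theorem one_add_norm_le_mul_exp (ha : IsGain a)
    (hF : ∀ t, 0 ≤ t → ∀ x, ‖F t x‖ ≤ K * (1 + ‖x‖))
    (hθ : IsIntegralCurveOn θ (fun t x ↦ a t • F t x) (Ici 0)) (hs : 0 ≤ s) (hst : s ≤ t) :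
    1 + ‖θ t‖ ≤ (1 + ‖θ s‖) * Real.exp (K * (clock a t - clock a s)) := by
  have h_sub : Icc s t ⊆ Ici 0 := fun u hu ↦ hs.trans hu.1
  rw [add_comm 1, add_comm 1]
  refine norm_add_le_mul_exp_comp hst (hθ.continuousOn.mono h_sub)
    (fun u hu ↦ (hθ u (hs.trans hu.1)).mono (Ici_subset_Ici.2 (hs.trans hu.1)))
    (ha.continuousOn_clock.mono h_sub)
    (fun u hu ↦ (ha.hasDerivWithinAt_clock (hs.trans hu.1)).mono
      (Ici_subset_Ici.2 (hs.trans hu.1)))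
    (fun u hu ↦ ha.pos u (hs.trans hu.1)) fun u hu ↦ ?_
  have hu0 := hs.trans hu.1
  rw [norm_smul, Real.norm_of_nonneg (ha.pos u hu0).le, add_comm _ (1 : ℝ)]
  exact mul_le_mul_of_nonneg_left (hF u hu0 _) (ha.pos u hu0).le

theorem norm_smul_le_of_one_add_norm_le (ha : IsGain a) (hK : 0 ≤ K)
    (hF : ∀ t, 0 ≤ t → ∀ x, ‖F t x‖ ≤ K * (1 + ‖x‖))
    (hs : 0 ≤ s) (hst : s ≤ t) (hR : 1 + ‖θ t‖ ≤ R) : ‖a t • F t (θ t)‖ ≤ a s * (K * R) := by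
  have ht := hs.trans hst
  rw [norm_smul, Real.norm_of_nonneg (ha.pos t ht).le]
  gcongr
  exacts [(ha.pos s hs).le, ha.antitoneOn hs ht hst, (hF t ht _).trans (by gcongr)]

theorem norm_sub_le_of_one_add_norm_le (ha : IsGain a) (hK : 0 ≤ K)
    (hF : ∀ t, 0 ≤ t → ∀ x, ‖F t x‖ ≤ K * (1 + ‖x‖))
    (hθ : IsIntegralCurveOn θ (fun t x ↦ a t • F t x) (Ici 0)) {p r : ℝ} (hs : 0 ≤ s)
    (hsp : s ≤ p) (hpr : p ≤ r) (hR : ∀ u ∈ Icc p r, 1 + ‖θ u‖ ≤ R) :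
    ‖θ r - θ p‖ ≤ a s * (K * R) * (r - p) :=
  norm_image_sub_le_of_norm_deriv_le_segment'
    (fun u hu ↦ (hθ u (hs.trans (hsp.trans hu.1))).mono fun _ hw ↦ hs.trans (hsp.trans hw.1))
    (fun u hu ↦ ha.norm_smul_le_of_one_add_norm_le hK hF hs (hsp.trans hu.1)
      (hR u (Ico_subset_Icc_self hu)))
    r (right_mem_Icc.2 hpr)

theorem intervalIntegrable_smul_of_isIntegralCurveOn [CompleteSpace E] (ha : IsGain a)
    (hK : 0 ≤ K) (hF : ∀ t, 0 ≤ t → ∀ x, ‖F t x‖ ≤ K * (1 + ‖x‖))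
    (hθ : IsIntegralCurveOn θ (fun t x ↦ a t • F t x) (Ici 0)) (hs : 0 ≤ s) (hst : s ≤ t)
    (hR : ∀ u ∈ Icc s t, 1 + ‖θ u‖ ≤ R) :
    IntervalIntegrable (fun u ↦ a u • F u (θ u)) volume s t :=
  intervalIntegrable_of_hasDerivAt_of_norm_le hst
    (fun u hu ↦ (hθ u (hs.trans hu.1.le)).hasDerivAt (Ici_mem_nhds (hs.trans_lt hu.1)))
    fun u hu ↦ ha.norm_smul_le_of_one_add_norm_le hK hF hs hu.1.le (hR u (Ioo_subset_Icc_self hu))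

end IsGain

namespace IsGain

variable [CompleteSpace E] {v : E → E} {K : ℝ≥0} {a : ℝ → ℝ} {θ χ : ℝ → E} {s t η : ℝ}

-- Grönwall is applied to the difference of two differentiable curves, the integral of `a • v ∘ θ`
-- and the solution `χ`; the error `η` of `θ` enters only through `v (θ u)`.
theorem norm_sub_comp_clock_le (ha : IsGain a) (hv : LipschitzWith K v)
    (hθ : ContinuousOn θ (Ici 0)) (hχ : IsIntegralCurve χ fun _ ↦ v) (hχ₀ : χ 0 = θ s)
    (hs : 0 ≤ s) (hst : s ≤ t)
    (hη : ∀ u ∈ Icc s t, ‖θ u - (θ s + ∫ r in s..u, a r • v (θ r))‖ ≤ η) :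
    ‖θ t - χ (clock a t - clock a s)‖ ≤ η * Real.exp (K * (clock a t - clock a s)) := by
  let y (u : ℝ) : E := θ s + ∫ r in s..u, a r • v (θ r)
  let z (u : ℝ) : E := y u - χ (clock a u - clock a s)
  let z' (u : ℝ) : E := a u • v (θ u) - a u • v (χ (clock a u - clock a s))
  have hz (u : ℝ) (hu : 0 ≤ u) : HasDerivWithinAt z (z' u) (Ici 0) u := by
    refine HasDerivWithinAt.sub (.const_add _ (hasDerivWithinAt_integral_of_continuousOn_Ici
      (ha.continuousOn.smul (hv.continuous.comp_continuousOn hθ)) hs hu)) ?_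
    exact (hχ _).scomp_hasDerivWithinAt u ((ha.hasDerivWithinAt_clock hu).sub_const _)
  have h_sub : Icc s t ⊆ Ici 0 := fun u hu ↦ hs.trans hu.1
  have hz' (u : ℝ) (hu : u ∈ Ico s t) : ‖z' u‖ ≤ a u * (K * (‖z u‖ + η)) := by
    have hau := (ha.pos u (hs.trans hu.1)).le
    have hθz : ‖θ u - χ (clock a u - clock a s)‖ ≤ ‖z u‖ + η := by
      linarith [norm_sub_le_norm_sub_add_norm_sub (θ u) (y u) (χ (clock a u - clock a s)),
        hη u (Ico_subset_Icc_self hu)]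
    simp only [z', ← smul_sub, norm_smul, Real.norm_of_nonneg hau]
    gcongr
    exact (hv.norm_sub_le _ _).trans (by gcongr)
  have h_right (u : ℝ) (hu : u ∈ Ico s t) : Ici u ⊆ Ici 0 := Ici_subset_Ici.2 (hs.trans hu.1)
  have key := norm_add_le_mul_exp_comp hst
    (fun u hu ↦ (hz u (h_sub hu)).continuousWithinAt.mono h_sub)
    (fun u hu ↦ (hz u (hs.trans hu.1)).mono (h_right u hu)) (ha.continuousOn_clock.mono h_sub)
    (fun u hu ↦ (ha.hasDerivWithinAt_clock (hs.trans hu.1)).mono (h_right u hu))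
    (fun u hu ↦ ha.pos u (hs.trans hu.1)) hz'
  have hzs : z s = 0 := by simp [z, y, hχ₀]
  rw [hzs, norm_zero, zero_add] at key
  linarith [norm_sub_le_norm_sub_add_norm_sub (θ t) (y t) (χ (clock a t - clock a s)),
    hη t (right_mem_Icc.2 hst)]

end IsGain

namespace AveragingBounds

variable [CompleteSpace E] {F : ℝ → E → E} {v : E → E} {K : ℝ≥0} {a : ℝ → ℝ} {θ χ : ℝ → E}
  {s t T ℓ R : ℝ}

theorem intervalIntegrable_and_sub_add_integral_avg_eq (h : AveragingBounds F v K) (ha : IsGain a)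
    (hθ : IsIntegralCurveOn θ (fun t x ↦ a t • F t x) (Ici 0)) (hs : 0 ≤ s) (hst : s ≤ t)
    (hR : ∀ r ∈ Icc s t, 1 + ‖θ r‖ ≤ R) :
    IntervalIntegrable (fun r ↦ a r • (F r (θ r) - v (θ r))) volume s t ∧
      θ t - (θ s + ∫ r in s..t, a r • v (θ r)) = ∫ r in s..t, a r • (F r (θ r) - v (θ r)) := by
  have h_sub : Icc s t ⊆ Ici 0 := fun u hu ↦ hs.trans hu.1
  have hθ_cont : ContinuousOn θ (Icc s t) := hθ.continuousOn.mono h_sub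
  have hF_int := ha.intervalIntegrable_smul_of_isIntegralCurveOn K.coe_nonneg h.norm_le hθ hs hst hR
  have hv_int : IntervalIntegrable (fun r ↦ a r • v (θ r)) volume s t :=
    ContinuousOn.intervalIntegrable_of_Icc hst ((ha.continuousOn.mono h_sub).smul
      (h.lipschitzWith_avg.continuous.comp_continuousOn hθ_cont))
  have hθ_eq : ∫ r in s..t, a r • F r (θ r) = θ t - θ s :=
    integral_eq_sub_of_hasDeriv_right_of_le hst hθ_cont
      (fun r hr ↦ (hθ r (hs.trans hr.1.le)).mono
        (Ioi_subset_Ici_self.trans (Ici_subset_Ici.2 (hs.trans hr.1.le)))) hF_int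
  simp only [smul_sub]
  exact ⟨hF_int.sub hv_int, by rw [intervalIntegral.integral_sub hF_int hv_int, hθ_eq, sub_sub]⟩

theorem norm_sub_add_integral_avg_le (h : AveragingBounds F v K) (ha : IsGain a)
    (hθ : IsIntegralCurveOn θ (fun t x ↦ a t • F t x) (Ici 0)) (hs : 0 ≤ s) (hst : s ≤ t)
    (hℓ : 0 < ℓ) (hR : ∀ r ∈ Icc s t, 1 + ‖θ r‖ ≤ R) :
    ‖θ t - (θ s + ∫ r in s..t, a r • v (θ r))‖ ≤
      2 * K * R * (ℓ + 2) * a s +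
        (2 * K * R / ℓ + 2 * K * (a s * (K * R) * ℓ)) * (clock a t - clock a s) := by
  obtain ⟨h_diag_int, h_eq⟩ := h.intervalIntegrable_and_sub_add_integral_avg_eq ha hθ hs hst hR
  rw [h_eq, ha.clock_sub_clock hs (hs.trans hst)]
  refine norm_integral_smul_diag_le_of_antitoneOn (h := fun p r ↦ F r (θ p) - v (θ p)) hℓ hst
    (ha.antitoneOn.mono fun u hu ↦ hs.trans hu.1) (ha.pos t (hs.trans hst)).le
    (fun p q hsp hpq _ ↦ h.intervalIntegrable_sub_avg (hs.trans hsp) (hs.trans (hsp.trans hpq)) _)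
    h_diag_int (fun p r hsp hpr hrt ↦ ?_) (fun p q hsp hpq hqt ↦ ?_) (fun p r hsp hpr hrp hrt ↦ ?_)
  · refine (h.norm_sub_avg_le (hs.trans (hsp.trans hpr)) _).trans ?_
    gcongr
    exact hR p ⟨hsp, hpr.trans hrt⟩
  · refine (h.norm_integral_sub_avg_le (hs.trans hsp) (hs.trans (hsp.trans hpq)) _).trans ?_
    gcongr
    exact hR p ⟨hsp, hpq.trans hqt⟩
  · refine (h.norm_sub_avg_sub_le (hs.trans (hsp.trans hpr)) _ _).trans ?_
    have hR₀ : 0 ≤ R := le_trans (by positivity) (hR p ⟨hsp, hpr.trans hrt⟩)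
    have has := (ha.pos s hs).le
    gcongr
    refine (ha.norm_sub_le_of_one_add_norm_le K.coe_nonneg h.norm_le hθ hs hsp hpr
      fun u hu ↦ hR u ⟨hsp.trans hu.1, hu.2.trans hrt⟩).trans ?_
    gcongr
    linarith

-- The window length `ℓ = 1 / √(a s)` balances the boundary terms, of order `ℓ * a s`, against the
-- number of windows, of order `1 / (ℓ * a s)`.
theorem norm_sub_comp_clock_le (h : AveragingBounds F v K) (ha : IsGain a)
    (hθ : IsIntegralCurveOn θ (fun t x ↦ a t • F t x) (Ici 0))
    (hχ : IsIntegralCurve χ fun _ ↦ v) (hχ₀ : χ 0 = θ s) (hs : 0 ≤ s) (hst : s ≤ t)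
    (hT : clock a t - clock a s ≤ T) :
    ‖θ t - χ (clock a t - clock a s)‖ ≤
      2 * K * Real.exp (2 * K * T) * (√(a s) * (1 + 2 * √(a s) + (1 + K) * T)) * (1 + ‖θ s‖) := by
  set R := (1 + ‖θ s‖) * Real.exp (K * T)
  set α := √(a s)
  have hα : 0 < α := Real.sqrt_pos.2 (ha.pos s hs)
  have hαs : a s = α ^ 2 := (Real.sq_sqrt (ha.pos s hs).le).symm
  have h_clock (u : ℝ) (hu : u ∈ Icc s t) : clock a u - clock a s ≤ T := by
    have hut := ha.strictMonoOn_clock.monotoneOn (hs.trans hu.1) (hs.trans hst) hu.2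
    linarith
  have hR (u : ℝ) (hu : u ∈ Icc s t) : 1 + ‖θ u‖ ≤ R :=
    (ha.one_add_norm_le_mul_exp h.norm_le hθ hs hu.1).trans (by
      simp only [R]; gcongr; exact h_clock u hu)
  have hη (u : ℝ) (hu : u ∈ Icc s t) : ‖θ u - (θ s + ∫ r in s..u, a r • v (θ r))‖ ≤
      2 * K * R * (α * (1 + 2 * α + (1 + K) * T)) := by
    calc ‖θ u - (θ s + ∫ r in s..u, a r • v (θ r))‖
        ≤ 2 * K * R * (α⁻¹ + 2) * a s +
          (2 * K * R / α⁻¹ + 2 * K * (a s * (K * R) * α⁻¹)) * (clock a u - clock a s) :=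
          h.norm_sub_add_integral_avg_le ha hθ hs hu.1 (inv_pos.2 hα)
            fun r hr ↦ hR r ⟨hr.1, hr.2.trans hu.2⟩
      _ ≤ 2 * K * R * (α⁻¹ + 2) * a s +
          (2 * K * R / α⁻¹ + 2 * K * (a s * (K * R) * α⁻¹)) * T := by
          have has := (ha.pos s hs).le
          gcongr
          exact h_clock u hu
      _ = 2 * K * R * (α * (1 + 2 * α + (1 + K) * T)) := by rw [hαs]; field_simp
  calc ‖θ t - χ (clock a t - clock a s)‖
      ≤ 2 * K * R * (α * (1 + 2 * α + (1 + K) * T)) * Real.exp (K * (clock a t - clock a s)) :=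
        ha.norm_sub_comp_clock_le h.lipschitzWith_avg hθ.continuousOn hχ hχ₀ hs hst hη
    _ ≤ 2 * K * R * (α * (1 + 2 * α + (1 + K) * T)) * Real.exp (K * T) := by
        gcongr
        exact (norm_nonneg _).trans (hη t (right_mem_Icc.2 hst))
    _ = 2 * K * Real.exp (2 * K * T) * (α * (1 + 2 * α + (1 + K) * T)) * (1 + ‖θ s‖) := by
        simp only [R]
        rw [show 2 * K * T = K * T + K * T by ring, Real.exp_add]
        ring

end AveragingBounds

/-- The curve `θ`, observed on the clock `g`, shadows the flow of `v` on every bounded clock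
interval, up to an error that vanishes relative to `1 + ‖θ s‖` as the starting time `s` grows. This
is Benaïm and Hirsch's notion without the a priori boundedness of `θ`. -/
def IsAsymptoticPseudotrajectory (v : E → E) (g : ℝ → ℝ) (θ : ℝ → E) : Prop :=
  ∀ T, ∀ δ > 0, ∀ᶠ s in atTop, ∀ χ : ℝ → E, (IsIntegralCurve χ fun _ ↦ v) → χ 0 = θ s →
    ∀ t, s ≤ t → g t - g s ≤ T → ‖θ t - χ (g t - g s)‖ ≤ δ * (1 + ‖θ s‖)

theorem AveragingBounds.isAsymptoticPseudotrajectory [CompleteSpace E] {F : ℝ → E → E} {v : E → E}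
    {K : ℝ≥0} {a : ℝ → ℝ} {θ : ℝ → E} (h : AveragingBounds F v K) (ha : IsGain a)
    (hθ : IsIntegralCurveOn θ (fun t x ↦ a t • F t x) (Ici 0)) :
    IsAsymptoticPseudotrajectory v (clock a) θ := by
  intro T δ hδ
  have h_sqrt : Tendsto (fun s ↦ √(a s)) atTop (𝓝 0) := by simpa using ha.tendsto_zero.sqrt
  have h_lim : Tendsto (fun s ↦ 2 * K * Real.exp (2 * K * T) *
      (√(a s) * (1 + 2 * √(a s) + (1 + K) * T))) atTop (𝓝 0) := by
    simpa using (h_sqrt.mul (((h_sqrt.const_mul 2).const_add 1).add_const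
      ((1 + (K : ℝ)) * T))).const_mul (2 * K * Real.exp (2 * K * T))
  filter_upwards [h_lim.eventually_le_const hδ, eventually_ge_atTop 0] with s hsδ hs
    χ hχ hχ₀ t hst hT
  refine (h.norm_sub_comp_clock_le ha hθ hχ hχ₀ hs hst hT).trans ?_
  gcongr

/-! ### Lyapunov drift and uniform attraction -/

/-- `V` is a Lyapunov function for the flow of `v` in integrated form: outside the ball of radius
`c`, a unit of time decreases `V` by at least the norm of the starting point. Since `v` is
autonomous, only solutions started at time `0` are considered. -/
def HasUnitTimeDrift (v : E → E) (V : E → ℝ) (c : ℝ) : Prop :=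
  ∀ χ : ℝ → E, (IsIntegralCurve χ fun _ ↦ v) → c < ‖χ 0‖ → V (χ 1) + ‖χ 0‖ ≤ V (χ 0)

/-- The flow of `v` converges to `x`, uniformly over bounded sets of initial conditions. -/
def IsUniformlyAttracting (v : E → E) (x : E) : Prop :=
  ∀ ε > 0, ∀ b, ∃ τ, ∀ χ : ℝ → E, (IsIntegralCurve χ fun _ ↦ v) → ‖χ 0‖ ≤ b →
    ∀ w, τ ≤ w → ‖χ w - x‖ ≤ ε

theorem HasUnitTimeDrift.norm_le_max [CompleteSpace E] {v : E → E} {V : E → ℝ} {K : ℝ≥0} {c : ℝ}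
    (h : HasUnitTimeDrift v V c) (hv : LipschitzWith K v) (hV : ∀ x, 0 ≤ V x) (x : E) :
    ‖x‖ ≤ max c (V x) := by
  rcases le_or_gt ‖x‖ c with hx | hx
  · exact le_max_of_le_left hx
  · obtain ⟨χ, rfl, hχ⟩ := exists_isIntegralCurve_of_lipschitzWith hv x
    exact le_max_of_le_right (by linarith [h χ hχ hx, hV (χ 1)])

theorem one_add_norm_le_mul_exp_of_isIntegralCurve {v : E → E} {χ : ℝ → E} {K w : ℝ}
    (hv : ∀ x, ‖v x‖ ≤ K * (1 + ‖x‖)) (hχ : IsIntegralCurve χ fun _ ↦ v) (hw : 0 ≤ w) :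
    1 + ‖χ w‖ ≤ (1 + ‖χ 0‖) * Real.exp (K * w) := by
  have h := norm_add_le_mul_exp_comp (a := fun _ ↦ 1) (g := id) (K := K) (η := 1) hw
    (fun u _ ↦ (hχ u).continuousAt.continuousWithinAt) (fun u _ ↦ (hχ u).hasDerivWithinAt)
    continuousOn_id (fun u _ ↦ hasDerivWithinAt_id u _) (fun _ _ ↦ one_pos)
    (fun u _ ↦ by rw [one_mul, add_comm]; exact hv (χ u))
  simpa only [id_eq, sub_zero, add_comm] using h

theorem forall_of_forall_unit_step {P : ℝ → Prop} {g : ℝ → ℝ} {S : ℝ}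
    (hg : ContinuousOn g (Ici S)) (h_base : ∀ t, S ≤ t → g t ≤ g S + 1 → P t)
    (h_step : ∀ s t, S ≤ s → s ≤ t → g t = g s + 1 → P s → P t) : ∀ t, S ≤ t → P t := by
  have h_all (n : ℕ) : ∀ t, S ≤ t → g t ≤ g S + n → P t := by
    induction n with
    | zero => exact fun t hSt hgt ↦ h_base t hSt (by push_cast at hgt; linarith)
    | succ n ih =>
      intro t hSt hgt
      rcases le_total (g t) (g S + 1) with h | h
      · exact h_base t hSt h
      obtain ⟨s, ⟨hSs, hst⟩, hgs⟩ := intermediate_value_Icc hSt (hg.mono Icc_subset_Ici_self)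
        (show g t - 1 ∈ Icc (g S) (g t) from ⟨by linarith, by linarith⟩)
      exact h_step s t hSs hst (by linarith) (ih s hSs (by push_cast at hgt; linarith))
  intro t hSt
  obtain ⟨n, hn⟩ := exists_nat_ge (g t - g S)
  exact h_all n t hSt (by linarith)

namespace IsAsymptoticPseudotrajectory

variable [CompleteSpace E] {v : E → E} {V : E → ℝ} {K L : ℝ≥0} {c : ℝ} {g : ℝ → ℝ} {θ : ℝ → E}
  {x : E}

theorem exists_eventually_one_add_norm_le (h : IsAsymptoticPseudotrajectory v g θ)
    (hv : LipschitzWith K v) :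
    ∃ C ≥ 0, ∀ᶠ s in atTop, ∀ t, s ≤ t → g s ≤ g t → g t ≤ g s + 1 →
      1 + ‖θ t‖ ≤ C * (1 + ‖θ s‖) := by
  let K' := max K ‖v 0‖₊
  have hv' (y : E) : ‖v y‖ ≤ K' * (1 + ‖y‖) :=
    norm_le_mul_one_add_norm_of_lipschitzWith (hv.weaken (le_max_left _ _))
      (NNReal.coe_le_coe.2 (le_max_right K ‖v 0‖₊)) y
  refine ⟨Real.exp K' + 1, by positivity, ?_⟩
  filter_upwards [h 1 1 one_pos] with s hs t hst hgst hgt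
  obtain ⟨χ, hχ₀, hχ⟩ := exists_isIntegralCurve_of_lipschitzWith hv (θ s)
  have hθχ := hs χ hχ hχ₀ t hst (by linarith)
  have hχ_le : 1 + ‖χ (g t - g s)‖ ≤ (1 + ‖θ s‖) * Real.exp K' := by
    rw [← hχ₀]
    refine (one_add_norm_le_mul_exp_of_isIntegralCurve hv' hχ (sub_nonneg.2 hgst)).trans ?_
    gcongr
    exact mul_le_of_le_one_right K'.coe_nonneg (by linarith)
  linarith [norm_le_norm_sub_add (θ t) (χ (g t - g s))]

theorem eventually_lyapunov_le (h : IsAsymptoticPseudotrajectory v g θ) (hv : LipschitzWith K v)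
    (hV : LipschitzWith L V) (h_drift : HasUnitTimeDrift v V c) :
    ∀ᶠ s in atTop, ∀ t, s ≤ t → g t = g s + 1 → max c 1 < ‖θ s‖ → V (θ t) ≤ V (θ s) := by
  filter_upwards [h 1 (1 / (2 * (L + 1))) (by positivity)] with s hs t hst hgt hθs
  obtain ⟨χ, hχ₀, hχ⟩ := exists_isIntegralCurve_of_lipschitzWith hv (θ s)
  have hg : g t - g s = 1 := by linarith
  have hθχ := hs χ hχ hχ₀ t hst hg.le
  rw [hg] at hθχ
  have h_err : V (θ t) - V (χ 1) ≤ (1 + ‖θ s‖) / 2 :=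
    calc V (θ t) - V (χ 1) ≤ L * ‖θ t - χ 1‖ := (le_abs_self _).trans (hV.norm_sub_le _ _)
      _ ≤ (L + 1) * (1 / (2 * (L + 1)) * (1 + ‖θ s‖)) := by gcongr; linarith
      _ = (1 + ‖θ s‖) / 2 := by field_simp
  have h_dec := h_drift χ hχ (hχ₀ ▸ (le_max_left _ _).trans_lt hθs)
  rw [hχ₀] at h_dec
  linarith [(le_max_right c 1).trans_lt hθs]

theorem exists_eventually_lyapunov_le (h : IsAsymptoticPseudotrajectory v g θ)
    (hv : LipschitzWith K v) (hV : LipschitzWith L V) (h_drift : HasUnitTimeDrift v V c)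
    (hg : ContinuousOn g (Ici 0)) (hg_mono : MonotoneOn g (Ici 0)) :
    ∃ D, ∀ᶠ t in atTop, V (θ t) ≤ D := by
  obtain ⟨C, hC, h_growth⟩ := h.exists_eventually_one_add_norm_le hv
  obtain ⟨S, hS⟩ := eventually_atTop.1
    (h_growth.and ((h.eventually_lyapunov_le hv hV h_drift).and (eventually_ge_atTop 0)))
  let b := max (max c 1) ‖θ S‖
  have h_near (s t : ℝ) (hSs : S ≤ s) (hst : s ≤ t) (hgt : g t ≤ g s + 1) (hb : ‖θ s‖ ≤ b) :
      V (θ t) ≤ V 0 + L * (C * (1 + b)) := by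
    have hθt : ‖θ t‖ ≤ C * (1 + b) := by
      have := (hS s hSs).1 t hst
        (hg_mono (hS s hSs).2.2 ((hS s hSs).2.2.trans hst) hst) hgt
      have hCb : C * (1 + ‖θ s‖) ≤ C * (1 + b) := by gcongr
      linarith
    have hVt : V (θ t) - V 0 ≤ L * ‖θ t - 0‖ := (le_abs_self _).trans (hV.norm_sub_le _ _)
    rw [sub_zero] at hVt
    linarith [mul_le_mul_of_nonneg_left hθt L.coe_nonneg]
  have h_clock : ContinuousOn g (Ici S) := hg.mono (Ici_subset_Ici.2 (hS S le_rfl).2.2)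
  refine ⟨_, eventually_atTop.2 ⟨S, forall_of_forall_unit_step h_clock
    (fun t hSt hgt ↦ h_near S t le_rfl hSt hgt (le_max_right _ _)) fun s t hSs hst hgt hVs ↦ ?_⟩⟩
  rcases le_or_gt ‖θ s‖ b with hb | hb
  · exact h_near s t hSs hst hgt.le hb
  · exact ((hS s hSs).2.1 t hst hgt ((le_max_left _ _).trans_lt hb)).trans hVs

theorem tendsto_of_eventually_norm_le (h : IsAsymptoticPseudotrajectory v g θ)
    (hv : LipschitzWith K v) (hg : ContinuousOn g (Ici 0)) (hg_top : Tendsto g atTop atTop)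
    (hx : IsUniformlyAttracting v x) {b : ℝ} (hb : ∀ᶠ t in atTop, ‖θ t‖ ≤ b) :
    Tendsto θ atTop (𝓝 x) := by
  have hb₀ : 0 ≤ b := hb.exists.elim fun _ ht ↦ (norm_nonneg _).trans ht
  rw [Metric.nhds_basis_closedBall.tendsto_right_iff]
  intro ε hε
  obtain ⟨τ, hτ⟩ := hx (ε / 2) (by positivity) b
  obtain ⟨S, hS⟩ := eventually_atTop.1 ((h (max τ 0) (ε / (2 * (1 + b))) (by positivity)).and
    (hb.and (eventually_ge_atTop 0)))
  filter_upwards [eventually_ge_atTop S, hg_top.eventually_ge_atTop (g S + max τ 0)] with t hSt hgt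
  obtain ⟨s, ⟨hSs, hst⟩, hgs⟩ := intermediate_value_Icc hSt
    (hg.mono fun u hu ↦ (hS S le_rfl).2.2.trans hu.1)
    (show g t - max τ 0 ∈ Icc (g S) (g t) from
      ⟨by linarith, by linarith [le_max_right τ 0]⟩)
  obtain ⟨h_track, hθs, -⟩ := hS s hSs
  obtain ⟨χ, hχ₀, hχ⟩ := exists_isIntegralCurve_of_lipschitzWith hv (θ s)
  have h_near : ‖θ t - χ (g t - g s)‖ ≤ ε / 2 :=
    calc ‖θ t - χ (g t - g s)‖ ≤ ε / (2 * (1 + b)) * (1 + ‖θ s‖) :=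
          h_track χ hχ hχ₀ t hst (by linarith)
      _ ≤ ε / (2 * (1 + b)) * (1 + b) := by gcongr
      _ = ε / 2 := by field_simp
  have h_far : ‖χ (g t - g s) - x‖ ≤ ε / 2 :=
    hτ χ hχ (hχ₀ ▸ hθs) _ (by linarith [le_max_left τ 0])
  rw [Metric.mem_closedBall, dist_eq_norm]
  linarith [norm_sub_le_norm_sub_add_norm_sub (θ t) (χ (g t - g s)) x]

theorem tendsto_of_hasUnitTimeDrift (h : IsAsymptoticPseudotrajectory v g θ)
    (hv : LipschitzWith K v) (hg : ContinuousOn g (Ici 0)) (hg_mono : MonotoneOn g (Ici 0))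
    (hg_top : Tendsto g atTop atTop) (hV : LipschitzWith L V) (hV_nonneg : ∀ x, 0 ≤ V x)
    (h_drift : HasUnitTimeDrift v V c) (hx : IsUniformlyAttracting v x) :
    Tendsto θ atTop (𝓝 x) := by
  obtain ⟨D, hD⟩ := h.exists_eventually_lyapunov_le hv hV h_drift hg hg_mono
  exact h.tendsto_of_eventually_norm_le hv hg hg_top hx
    (hD.mono fun t ht ↦ (h_drift.norm_le_max hv hV_nonneg (θ t)).trans (max_le_max_left c ht))

end IsAsymptoticPseudotrajectory

/-! ### Integrability of the forcing -/

theorem IsUniformlyAttracting.eq_of_apply_eq_zero {v : E → E} {x y : E}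
    (h : IsUniformlyAttracting v x) (hy : v y = 0) : y = x := by
  have h_const : IsIntegralCurve (fun _ ↦ y) fun _ ↦ v := fun t ↦ by
    simpa only [hy] using hasDerivAt_const t y
  refine eq_of_forall_dist_le fun ε hε ↦ ?_
  obtain ⟨τ, hτ⟩ := h ε hε ‖y‖
  rw [dist_eq_norm]
  exact hτ _ h_const le_rfl τ le_rfl

-- The integral of a nonintegrable function is `0` by convention, so the bound reads `‖y‖ ≤ C / T`.
theorem eq_zero_of_norm_average_sub_le_of_not_intervalIntegrable {φ : ℝ → E} {y : E} {C T₀ : ℝ}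
    (hT₀ : 0 ≤ T₀) (hφ : ¬ IntervalIntegrable φ volume 0 T₀)
    (h : ∀ T, 0 < T → ‖(1 / T) • (∫ t in (0 : ℝ)..T, φ t) - y‖ ≤ C / T) : y = 0 := by
  have h_bound : ∀ᶠ T in atTop, ‖y‖ ≤ C / T := by
    filter_upwards [eventually_ge_atTop T₀, eventually_gt_atTop 0] with T hT hT_pos
    have hφT : ¬ IntervalIntegrable φ volume 0 T := fun h_int ↦
      hφ (intervalIntegrable_of_le_of_le h_int le_rfl hT₀ hT)
    simpa [integral_undef hφT] using h T hT_pos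
  exact norm_le_zero_iff.1 (ge_of_tendsto (tendsto_const_nhds.div_atTop tendsto_id) h_bound)

theorem aestronglyMeasurable_of_forall_ne {α X Y : Type*} {_ : MeasurableSpace α} {μ : Measure α}
    [TopologicalSpace X] [FirstCountableTopology X] [TopologicalSpace Y]
    [TopologicalSpace.PseudoMetrizableSpace Y] {F : α → X → Y} {x : X} [(𝓝[≠] x).NeBot]
    (hF : ∀ᵐ t ∂μ, ContinuousAt (F t) x)
    (h : ∀ y ≠ x, AEStronglyMeasurable (fun t ↦ F t y) μ) :
    AEStronglyMeasurable (fun t ↦ F t x) μ := by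
  obtain ⟨u, hu⟩ := exists_seq_tendsto (𝓝[≠] x)
  obtain ⟨hux, hu_ne⟩ := tendsto_nhdsWithin_iff.1 hu
  obtain ⟨N, hN⟩ := eventually_atTop.1 hu_ne
  exact aestronglyMeasurable_of_tendsto_ae atTop (fun n ↦ h (u (n + N)) (hN _ (by lia)))
    (hF.mono fun t ht ↦ ht.tendsto.comp ((tendsto_add_atTop_iff_nat N).2 hux))

theorem intervalIntegrable_of_forall_ne {F : ℝ → E → E} {K : ℝ≥0} {x : E} {C T : ℝ} (hT : 0 ≤ T)
    (hF : ∀ t, 0 ≤ t → LipschitzWith K (F t)) (hC : ∀ t, 0 ≤ t → ‖F t x‖ ≤ C)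
    (h : ∀ y ≠ x, IntervalIntegrable (fun t ↦ F t y) volume 0 T) :
    IntervalIntegrable (fun t ↦ F t x) volume 0 T := by
  rcases subsingleton_or_nontrivial E with _ | _
  · exact intervalIntegrable_const.congr fun _ _ ↦ Subsingleton.elim (0 : E) _
  have := Module.punctured_nhds_neBot ℝ E x
  simp only [intervalIntegrable_iff_integrableOn_Ioc_of_le hT] at h ⊢
  have h_pos {P : ℝ → Prop} (hP : ∀ t, 0 ≤ t → P t) : ∀ᵐ t ∂volume.restrict (Ioc 0 T), P t :=
    ae_restrict_of_forall_mem measurableSet_Ioc fun t ht ↦ hP t ht.1.le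
  exact .of_bound measure_Ioc_lt_top (aestronglyMeasurable_of_forall_ne
    (h_pos fun t ht ↦ (hF t ht).continuous.continuousAt) fun y hy ↦ (h y hy).1) C (h_pos hC)

theorem norm_integral_sub_le_of_norm_average_sub_le [CompleteSpace E] {φ : ℝ → E} {y : E} {C T : ℝ}
    (hT : 0 < T) (hφ : IntervalIntegrable φ volume 0 T)
    (h : ‖(1 / T) • (∫ t in (0 : ℝ)..T, φ t) - y‖ ≤ C / T) :
    ‖∫ t in (0 : ℝ)..T, (φ t - y)‖ ≤ C := by
  have h_eq : ∫ t in (0 : ℝ)..T, (φ t - y) = T • ((1 / T) • (∫ t in (0 : ℝ)..T, φ t) - y) := by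
    rw [intervalIntegral.integral_sub hφ intervalIntegrable_const, intervalIntegral.integral_const,
      smul_sub, smul_smul, mul_one_div_cancel hT.ne', one_smul, sub_zero]
  rw [h_eq, norm_smul, Real.norm_of_nonneg hT.le]
  exact (le_div_iff₀' hT).1 h

-- By (A3), a point where `t ↦ F t y` fails to be integrable is an equilibrium of `v`, hence `x`
-- itself; and integrability at `x` follows from the other points by continuity of `F t`.
theorem IsUniformlyAttracting.intervalIntegrable {F : ℝ → E → E} {v : E → E} {x : E} {K : ℝ≥0}
    {b₀ T : ℝ} (h : IsUniformlyAttracting v x) (hF : ∀ t, 0 ≤ t → LipschitzWith K (F t))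
    (hF_le : ∀ t, 0 ≤ t → ∀ y, ‖F t y‖ ≤ K * (1 + ‖y‖))
    (h_avg : ∀ y T, 0 < T → ‖(1 / T) • (∫ t in (0 : ℝ)..T, F t y) - v y‖ ≤ b₀ / T * (1 + ‖y‖))
    (hT : 0 ≤ T) (y : E) : IntervalIntegrable (fun t ↦ F t y) volume 0 T := by
  have h_ne (y : E) (hyx : y ≠ x) : IntervalIntegrable (fun t ↦ F t y) volume 0 T := by
    by_contra hy
    exact hyx (h.eq_of_apply_eq_zero (eq_zero_of_norm_average_sub_le_of_not_intervalIntegrable hT hy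
      fun T hT ↦ (h_avg y T hT).trans_eq (div_mul_eq_mul_div _ _ _)))
  rcases eq_or_ne y x with rfl | hyx
  · exact intervalIntegrable_of_forall_ne hT hF (fun t ht ↦ hF_le t ht y) h_ne
  · exact h_ne y hyx

theorem IsUniformlyAttracting.exists_averagingBounds [CompleteSpace E] {F : ℝ → E → E} {v : E → E}
    {x : E} {L : ℝ≥0} {M b₀ : ℝ} (h : IsUniformlyAttracting v x)
    (hF : ∀ t, 0 ≤ t → LipschitzWith L (F t)) (hv : LipschitzWith L v)
    (hM : ∀ t, 0 ≤ t → ‖F t 0‖ ≤ M)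
    (h_avg : ∀ y T, 0 < T → ‖(1 / T) • (∫ t in (0 : ℝ)..T, F t y) - v y‖ ≤ b₀ / T * (1 + ‖y‖)) :
    ∃ K, AveragingBounds F v K := by
  let K : ℝ≥0 := max (max L M.toNNReal) (max ‖v 0‖₊ b₀.toNNReal)
  have hLK : L ≤ K := (le_max_left _ _).trans (le_max_left _ _)
  have hMK : M ≤ K := Real.toNNReal_le_iff_le_coe.1 ((le_max_right _ _).trans (le_max_left _ _))
  have hv₀K : ‖v 0‖ ≤ K :=
    NNReal.coe_le_coe.2 ((le_max_left ‖v 0‖₊ _).trans (le_max_right (max L M.toNNReal) _))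
  have hb₀K : b₀ ≤ K := Real.toNNReal_le_iff_le_coe.1 ((le_max_right _ _).trans (le_max_right _ _))
  have hF_le (t : ℝ) (ht : 0 ≤ t) (y : E) : ‖F t y‖ ≤ K * (1 + ‖y‖) :=
    norm_le_mul_one_add_norm_of_lipschitzWith ((hF t ht).weaken hLK) ((hM t ht).trans hMK) y
  have h_int (y : E) (T : ℝ) (hT : 0 ≤ T) : IntervalIntegrable (fun t ↦ F t y) volume 0 T :=
    h.intervalIntegrable (fun t ht ↦ (hF t ht).weaken hLK) hF_le h_avg hT y
  refine ⟨K, fun t ht ↦ (hF t ht).weaken hLK, hv.weaken hLK, hF_le,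
    norm_le_mul_one_add_norm_of_lipschitzWith (hv.weaken hLK) hv₀K, h_int, fun y T hT ↦ ?_⟩
  rcases hT.eq_or_lt with rfl | hT'
  · simp only [integral_same, norm_zero]
    positivity
  · refine (norm_integral_sub_le_of_norm_average_sub_le hT' (h_int y T hT)
      ((h_avg y T hT').trans_eq (div_mul_eq_mul_div _ _ _))).trans ?_
    gcongr

theorem lipschitzWith_toNNReal_of_norm_sub_le {F G : Type*} [SeminormedAddCommGroup F]
    [SeminormedAddCommGroup G] {f : F → G} {C : ℝ} (h : ∀ x y, ‖f y - f x‖ ≤ C * ‖y - x‖) :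
    LipschitzWith C.toNNReal f :=
  .of_dist_le' fun x y ↦ by simpa only [dist_eq_norm] using h y x

theorem QSA_convergence_general [CompleteSpace E] {F : ℝ → E → E} {fbar : E → E} {a : ℝ → ℝ}
    {V : E → ℝ} {θ : ℝ → E} {θstar : E} {c₀ b₀ M : ℝ} {L : ℝ≥0} (ha : IsGain a)
    (hA1 : IsUniformlyAttracting fbar θstar) (hA2 : HasUnitTimeDrift fbar V c₀)
    (hA3 : ∀ x T, 0 < T →
      ‖(1 / T) • (∫ t in (0 : ℝ)..T, F t x) - fbar x‖ ≤ b₀ / T * (1 + ‖x‖))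
    (hV_nonneg : ∀ x, 0 ≤ V x) (hV : LipschitzWith L V) (hfbar : LipschitzWith L fbar)
    (hF : ∀ t, 0 ≤ t → LipschitzWith L (F t)) (hF₀ : ∀ t, 0 ≤ t → ‖F t 0‖ ≤ M)
    (hθ : IsIntegralCurveOn θ (fun t x ↦ a t • F t x) (Ici 0)) :
    Tendsto θ atTop (𝓝 θstar) := by
  obtain ⟨K, hK⟩ := hA1.exists_averagingBounds hF hfbar hF₀ hA3
  exact (hK.isAsymptoticPseudotrajectory ha hθ).tendsto_of_hasUnitTimeDrift hfbar
    ha.continuousOn_clock ha.strictMonoOn_clock.monotoneOn ha.tendsto_clock hV hV_nonneg hA2 hA1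

end

/-- Convergence of quasi-stochastic approximation (Theorem 1): under Assumptions
(A1)–(A5) and boundedness of `f(0,ξ(·))`, every solution of the QSA ODE
`dθ/dt = a(t) f(θ(t), ξ(t))` converges to `θ*` as `t → ∞`, for every initial
condition `θ(0)`. -/
theorem QSA_convergence
    (dd mm : ℕ)
    (f : EuclideanSpace ℝ (Fin dd) → EuclideanSpace ℝ (Fin mm) → EuclideanSpace ℝ (Fin dd))
    (ξ : ℝ → EuclideanSpace ℝ (Fin mm)) (hξ : ContinuousOn ξ (Set.Ici 0))
    (fbar : EuclideanSpace ℝ (Fin dd) → EuclideanSpace ℝ (Fin dd))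
    (hfbar : ∀ θ, Tendsto (fun T : ℝ => (1 / T) • ∫ t in (0:ℝ)..T, f θ (ξ t))
      atTop (nhds (fbar θ)))
    -- (A5): the gain process
    (a : ℝ → ℝ) (ha_pos : ∀ t : ℝ, 0 ≤ t → 0 < a t) (ha_cont : ContinuousOn a (Set.Ici 0))
    (ha_dec : ∀ s t : ℝ, 0 ≤ s → s ≤ t → a t ≤ a s)
    (ha_to0 : Tendsto a atTop (nhds 0))
    (hg_top : Tendsto (fun t : ℝ => ∫ r in (0:ℝ)..t, a r) atTop atTop)
    -- (A1): uniform global asymptotic stability of the averaged ODE at θ*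
    (θstar : EuclideanSpace ℝ (Fin dd))
    (hA1 : ∀ ε : ℝ, 0 < ε → ∀ b : ℝ, ∃ τ : ℝ,
      ∀ χ : ℝ → EuclideanSpace ℝ (Fin dd),
        (∀ w : ℝ, 0 ≤ w → HasDerivAt χ (fbar (χ w)) w) → ‖χ 0‖ ≤ b →
        ∀ v : ℝ, τ ≤ v → ‖χ v - θstar‖ ≤ ε)
    -- (A2): Lyapunov drift for the averaged flow
    (V : EuclideanSpace ℝ (Fin dd) → ℝ) (hV_cont : Continuous V)
    (hV_nonneg : ∀ x, 0 ≤ V x) (c₀ : ℝ) (hc₀ : 0 < c₀)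
    (hA2 : ∀ χ : ℝ → EuclideanSpace ℝ (Fin dd),
      (∀ w : ℝ, 0 ≤ w → HasDerivAt χ (fbar (χ w)) w) →
      ∀ s : ℝ, 0 ≤ s → ∀ T : ℝ, 0 ≤ T → T ≤ 1 → c₀ < ‖χ s‖ →
        V (χ (s + T)) - V (χ s) ≤ -T * ‖χ s‖)
    -- (A3)
    (b₀ : ℝ)
    (hA3 : ∀ θ, ∀ T : ℝ, 0 < T →
      ‖(1 / T) • (∫ t in (0:ℝ)..T, f θ (ξ t)) - fbar θ‖ ≤ (b₀ / T) * (1 + ‖θ‖))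
    -- (A4)
    (L : ℝ)
    (hV_lip : ∀ θ θ', |V θ' - V θ| ≤ L * ‖θ' - θ‖)
    (hfbar_lip : ∀ θ θ', ‖fbar θ' - fbar θ‖ ≤ L * ‖θ' - θ‖)
    (hf_lip : ∀ x θ θ', ‖f θ' x - f θ x‖ ≤ L * ‖θ' - θ‖)
    -- boundedness of f(0, ξ(·))
    (hf0 : ∃ M : ℝ, ∀ t : ℝ, 0 ≤ t → ‖f 0 (ξ t)‖ ≤ M)
    -- the QSA process
    (θ : ℝ → EuclideanSpace ℝ (Fin dd))
    (hθ : ∀ t : ℝ, 0 ≤ t → HasDerivAt θ (a t • f (θ t) (ξ t)) t) :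
    Tendsto θ atTop (nhds θstar) := by
  obtain ⟨M, hM⟩ := hf0
  exact QSA_convergence_general (F := fun t x ↦ f x (ξ t)) (V := V)
    ⟨ha_pos, ha_cont, fun s hs t _ hst ↦ ha_dec s t hs hst, ha_to0, hg_top⟩
    (fun ε hε b ↦ (hA1 ε hε b).imp fun _ h χ hχ ↦ h χ fun w _ ↦ hχ w)
    (fun χ hχ hc ↦ by
      have h_drift := hA2 χ (fun w _ ↦ hχ w) 0 le_rfl 1 zero_le_one le_rfl hc
      rw [zero_add] at h_drift
      linarith)
    hA3 hV_nonneg (lipschitzWith_toNNReal_of_norm_sub_le hV_lip)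
    (lipschitzWith_toNNReal_of_norm_sub_le hfbar_lip)
    (fun t _ ↦ lipschitzWith_toNNReal_of_norm_sub_le (hf_lip (ξ t))) hM
    fun t ht ↦ (hθ t ht).hasDerivWithinAt
end

section
/- Coupling representation for linear QSA (Theorem 2, equation (26)). Suppose every eigenvalue λ of Ā = I + A satisfies Re(λ) < −ε_S, where 0 < ε_S and ε_S ≠ 1, and set δ_S = min(ε_S, 1). Suppose ξ, ξ^I and ξ^II are bounded on [0,∞). Then there exists a constant C < ∞, not depending on the initial condition, such that every linear QSA process θ satisfies, for all t ≥ 0: ‖θ(t) − (1/(t+1))·(ξ^I(t) + S(t;0)θ(0))‖ ≤ C/(1+t)^{1+δ_S}. -/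
open intervalIntegral

/-!
Write `L = I + A`. Integrating the noise by parts twice removes it from the equation up to an
integrable term: `p(t) = (1 + t) θ(t) - ξ^I(t) - (1 + t)⁻¹ L ξ^II(t)` satisfies
`p' = (1 + t)⁻¹ L p + (1 + t)⁻² (L + L²) ξ^II`. Variation of constants bounds `p(t) - S(t; 0) p(0)`
by a multiple of `∫₀ᵗ ‖S(t; r)‖ (1 + r)⁻² dr`. In logarithmic time `S` is `exp (s L)`, which decays
like `e^{-ε s}` by the spectral hypothesis, so `‖S(t; r)‖` is at most a multiple of
`((1 + r) / (1 + t))^ε` and the integral is of order `(1 + t)^{-min(ε, 1)}` as soon as `ε ≠ 1`.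
At `ε = 1` one first increases `ε` slightly, which a finite spectrum permits.
-/

open Set
open scoped Nat Topology

section

variable {𝕂 E : Type*} [RCLike 𝕂] [NormedAddCommGroup E] [NormedSpace 𝕂 E] [CompleteSpace E]

theorem exp_apply_eq_sum_range_of_pow_apply_eq_zero {f : E →L[𝕂] E} {k : ℕ} {v : E}
    (hv : (f ^ k) v = 0) :
    NormedSpace.exp f v = ∑ j ∈ Finset.range k, (j ! : 𝕂)⁻¹ • (f ^ j) v := by
  have hsum : HasSum (fun j : ℕ ↦ (j ! : 𝕂)⁻¹ • (f ^ j) v) (NormedSpace.exp f v) :=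
    (NormedSpace.exp_series_hasSum_exp' (𝕂 := 𝕂) f).mapL (ContinuousLinearMap.apply 𝕂 E v)
  refine hsum.unique (hasSum_sum_of_ne_finset_zero fun j hj ↦ ?_)
  have hkj : k ≤ j := by simpa using hj
  rw [← Nat.sub_add_cancel hkj, pow_add, mul_apply_eq_comp, hv, map_zero, smul_zero]

theorem exp_smul_apply_eq_smul_sum_range {f : E →L[𝕂] E} {μ : 𝕂} {k : ℕ} {v : E}
    (hv : ((f - algebraMap 𝕂 _ μ) ^ k) v = 0) (c : 𝕂) :
    NormedSpace.exp (c • f) v = NormedSpace.exp (c * μ) •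
      ∑ j ∈ Finset.range k, ((j ! : 𝕂)⁻¹ * c ^ j) • ((f - algebraMap 𝕂 _ μ) ^ j) v := by
  set N := f - algebraMap 𝕂 (E →L[𝕂] E) μ
  have hsplit : c • f = algebraMap 𝕂 (E →L[𝕂] E) (c * μ) + c • N := by
    rw [smul_sub, map_mul, ← Algebra.smul_def, add_sub_cancel]
  have hcN : ((c • N) ^ k) v = 0 := by rw [smul_pow, smul_apply, hv, smul_zero]
  let := NormedAlgebra.restrictScalars ℚ 𝕂 (E →L[𝕂] E)
  rw [hsplit, NormedSpace.exp_add_of_commute (Algebra.commute_algebraMap_left _ _),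
    ← NormedSpace.algebraMap_exp_comm, ← Algebra.smul_def, smul_apply,
    exp_apply_eq_sum_range_of_pow_apply_eq_zero hcN]
  simp only [smul_pow, smul_apply, smul_smul]

end

theorem pow_div_factorial_le_inv_pow_mul_exp {c s : ℝ} (hc : 0 < c) (hs : 0 ≤ s) (j : ℕ) :
    s ^ j / j ! ≤ (c ^ j)⁻¹ * Real.exp (c * s) := by
  rw [← div_eq_inv_mul, le_div_iff₀ (by positivity)]
  calc s ^ j / j ! * c ^ j = (c * s) ^ j / j ! := by rw [mul_pow]; ring
    _ ≤ Real.exp (c * s) := Real.pow_div_factorial_le_exp _ (by positivity) j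

section

variable {E : Type*} [NormedAddCommGroup E] [NormedSpace ℂ E]

theorem exists_norm_exp_smul_apply_le_of_pow_apply_eq_zero [CompleteSpace E] {f : E →L[ℂ] E}
    {ε : ℝ} {μ : ℂ} (hμ : μ.re < -ε) {k : ℕ} {v : E}
    (hv : ((f - algebraMap ℂ _ μ) ^ k) v = 0) :
    ∃ K : ℝ, ∀ s : ℝ, 0 ≤ s → ‖NormedSpace.exp ((s : ℂ) • f) v‖ ≤ K * Real.exp (-ε * s) := by
  set w : ℕ → E := fun j ↦ ((f - algebraMap ℂ _ μ) ^ j) v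
  set c : ℝ := -ε - μ.re with hc
  have hc0 : 0 < c := sub_pos.2 hμ
  refine ⟨∑ j ∈ Finset.range k, (c ^ j)⁻¹ * ‖w j‖, fun s hs ↦ ?_⟩
  have hterm (j : ℕ) : ‖((j ! : ℂ)⁻¹ * (s : ℂ) ^ j) • w j‖ ≤
      (c ^ j)⁻¹ * ‖w j‖ * Real.exp (c * s) := by
    have hcoeff : ‖(j ! : ℂ)⁻¹ * (s : ℂ) ^ j‖ = s ^ j / j ! := by
      simp [abs_of_nonneg hs, div_eq_inv_mul]
    rw [norm_smul, hcoeff, mul_right_comm]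
    gcongr
    exact pow_div_factorial_le_inv_pow_mul_exp hc0 hs j
  calc ‖NormedSpace.exp ((s : ℂ) • f) v‖
      = Real.exp (s * μ.re) * ‖∑ j ∈ Finset.range k, ((j ! : ℂ)⁻¹ * (s : ℂ) ^ j) • w j‖ := by
        rw [exp_smul_apply_eq_smul_sum_range hv, norm_smul, ← Complex.exp_eq_exp_ℂ,
          Complex.norm_exp, Complex.re_ofReal_mul]
    _ ≤ Real.exp (s * μ.re) * ∑ j ∈ Finset.range k, (c ^ j)⁻¹ * ‖w j‖ * Real.exp (c * s) := by
        gcongr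
        exact norm_sum_le_of_le _ fun j _ ↦ hterm j
    _ = (∑ j ∈ Finset.range k, (c ^ j)⁻¹ * ‖w j‖) * Real.exp (-ε * s) := by
        rw [← Finset.sum_mul, mul_left_comm, ← Real.exp_add, hc]
        ring_nf

variable [FiniteDimensional ℂ E]

theorem exists_norm_exp_smul_apply_le {f : E →L[ℂ] E} {ε : ℝ}
    (hf : ∀ μ ∈ spectrum ℂ (f : Module.End ℂ E), μ.re < -ε) (v : E) :
    ∃ K : ℝ, ∀ s : ℝ, 0 ≤ s → ‖NormedSpace.exp ((s : ℂ) • f) v‖ ≤ K * Real.exp (-ε * s) := by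
  have := FiniteDimensional.complete ℂ E
  have hv : v ∈ ⨆ μ, Module.End.maxGenEigenspace (f : Module.End ℂ E) μ :=
    Module.End.iSup_maxGenEigenspace_eq_top (f : Module.End ℂ E) ▸ Submodule.mem_top
  induction hv using Submodule.iSup_induction' with
  | mem μ v hv =>
    obtain rfl | hv0 := eq_or_ne v 0
    · exact ⟨0, by simp⟩
    obtain ⟨k, hk⟩ := (Module.End.mem_maxGenEigenspace _ _ _).1 hv
    have hμ : Module.End.HasEigenvalue (f : Module.End ℂ E) μ := by
      refine Module.End.hasEigenvalue_of_hasGenEigenvalue (k := k) fun h ↦ hv0 ?_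
      rwa [← Submodule.mem_bot ℂ, ← h, Module.End.mem_genEigenspace_nat]
    have hk' : ((f - algebraMap ℂ _ μ) ^ k) v = 0 := by
      rw [← ContinuousLinearMap.coe_coe, ContinuousLinearMap.toLinearMap_pow]
      exact hk
    exact exists_norm_exp_smul_apply_le_of_pow_apply_eq_zero (hf μ hμ.mem_spectrum) hk'
  | zero => exact ⟨0, by simp⟩
  | add x y _ _ hx hy =>
    obtain ⟨K, hK⟩ := hx
    obtain ⟨K', hK'⟩ := hy
    refine ⟨K + K', fun s hs ↦ ?_⟩
    rw [map_add, add_mul]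
    exact norm_add_le_of_le (hK s hs) (hK' s hs)

theorem exists_norm_exp_smul_le {f : E →L[ℂ] E} {ε : ℝ}
    (hf : ∀ μ ∈ spectrum ℂ (f : Module.End ℂ E), μ.re < -ε) :
    ∃ K : ℝ, ∀ s : ℝ, 0 ≤ s → ‖NormedSpace.exp ((s : ℂ) • f)‖ ≤ K * Real.exp (-ε * s) := by
  have := FiniteDimensional.complete ℂ E
  let g (s : Ici (0 : ℝ)) : E →L[ℂ] E :=
    (Real.exp (ε * s) : ℂ) • NormedSpace.exp (((s : ℝ) : ℂ) • f)
  have exp_mul_le_iff (s : Ici (0 : ℝ)) (x K : ℝ) :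
      Real.exp (ε * s) * x ≤ K ↔ x ≤ K * Real.exp (-ε * s) := by
    rw [← le_div_iff₀' (Real.exp_pos _), div_eq_mul_inv, ← Real.exp_neg, neg_mul]
  have norm_exp_ofReal (x : ℝ) : ‖(Real.exp x : ℂ)‖ = Real.exp x :=
    Complex.norm_of_nonneg (Real.exp_nonneg x)
  obtain ⟨K, hK⟩ : ∃ K, ∀ s, ‖g s‖ ≤ K := by
    refine banach_steinhaus fun v ↦ ?_
    obtain ⟨K, hK⟩ := exists_norm_exp_smul_apply_le hf v
    refine ⟨K, fun s ↦ ?_⟩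
    rw [smul_apply, norm_smul, norm_exp_ofReal, exp_mul_le_iff]
    exact hK s s.2
  refine ⟨K, fun s hs ↦ ?_⟩
  rw [← exp_mul_le_iff ⟨s, hs⟩, ← norm_exp_ofReal, ← norm_smul]
  exact hK ⟨s, hs⟩

end

section

variable {n : Type*} [Fintype n] [DecidableEq n]

theorem norm_toEuclideanCLM_le_norm_map_algebraMap (𝕜 : Type*) [RCLike 𝕜] (M : Matrix n n ℝ) :
    ‖Matrix.toEuclideanCLM (𝕜 := ℝ) M‖ ≤
      ‖Matrix.toEuclideanCLM (𝕜 := 𝕜) (M.map (algebraMap ℝ 𝕜))‖ := by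
  refine ContinuousLinearMap.opNorm_le_bound _ (norm_nonneg _) fun x ↦ ?_
  let ι (y : EuclideanSpace ℝ n) : EuclideanSpace 𝕜 n := WithLp.toLp 2 (algebraMap ℝ 𝕜 ∘ y)
  have norm_ι (y : EuclideanSpace ℝ n) : ‖ι y‖ = ‖y‖ := by
    simp [ι, EuclideanSpace.norm_eq]
  have map_ι : Matrix.toEuclideanCLM (𝕜 := 𝕜) (M.map (algebraMap ℝ 𝕜)) (ι x) =
      ι (Matrix.toEuclideanCLM (𝕜 := ℝ) M x) := by
    ext i
    exact ((algebraMap ℝ 𝕜).map_mulVec M x i).symm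
  rw [← norm_ι, ← norm_ι x, ← map_ι]
  exact ContinuousLinearMap.le_opNorm _ _

open scoped Matrix.Norms.Operator in
theorem toEuclideanCLM_exp {𝕜 : Type*} [RCLike 𝕜] (M : Matrix n n 𝕜) :
    Matrix.toEuclideanCLM (𝕜 := 𝕜) (NormedSpace.exp M) =
      NormedSpace.exp (Matrix.toEuclideanCLM (𝕜 := 𝕜) M) := by
  let := NormedAlgebra.restrictScalars ℚ 𝕜 (Matrix n n 𝕜)
  let := NormedAlgebra.restrictScalars ℚ 𝕜 (EuclideanSpace 𝕜 n →L[𝕜] EuclideanSpace 𝕜 n)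
  have hcont : Continuous (Matrix.toEuclideanCLM (n := n) (𝕜 := 𝕜)) :=
    LinearMap.continuous_of_finiteDimensional
      (Matrix.toEuclideanCLM (n := n) (𝕜 := 𝕜)).toAlgEquiv.toLinearMap
  exact NormedSpace.map_exp _ hcont M

open scoped Matrix.Norms.Operator in
theorem matrixExp_map_algebraMap (𝕜 : Type*) [RCLike 𝕜] (M : Matrix n n ℝ) :
    (NormedSpace.exp M).map (algebraMap ℝ 𝕜) = NormedSpace.exp (M.map (algebraMap ℝ 𝕜)) := by
  let := NormedAlgebra.restrictScalars ℚ ℝ (Matrix n n ℝ)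
  let := NormedAlgebra.restrictScalars ℚ 𝕜 (Matrix n n 𝕜)
  exact NormedSpace.map_exp (algebraMap ℝ 𝕜).mapMatrix
    (continuous_id.matrix_map (continuous_algebraMap ℝ 𝕜)) M

theorem exists_norm_exp_smul_toEuclideanCLM_le {M : Matrix n n ℝ} {ε : ℝ}
    (hM : ∀ μ ∈ spectrum ℂ (M.map (algebraMap ℝ ℂ)), μ.re < -ε) :
    ∃ K : ℝ, ∀ s : ℝ, 0 ≤ s →
      ‖NormedSpace.exp (s • Matrix.toEuclideanCLM (𝕜 := ℝ) M)‖ ≤ K * Real.exp (-ε * s) := by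
  have hspec : spectrum ℂ (Matrix.toEuclideanCLM (𝕜 := ℂ) (M.map (algebraMap ℝ ℂ)) :
      Module.End ℂ (EuclideanSpace ℂ n)) = spectrum ℂ (M.map (algebraMap ℝ ℂ)) :=
    Matrix.spectrum_toLpLin 2
  obtain ⟨K, hK⟩ := exists_norm_exp_smul_le (hspec ▸ hM)
  refine ⟨K, fun s hs ↦ le_trans ?_ (hK s hs)⟩
  rw [← map_smul, ← toEuclideanCLM_exp, ← map_smul, ← toEuclideanCLM_exp]
  refine (norm_toEuclideanCLM_le_norm_map_algebraMap ℂ _).trans_eq ?_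
  congr 3
  rw [matrixExp_map_algebraMap]
  congr 1
  ext i j
  simp

end

theorem exists_gt_ne_forall_re_lt_neg {s : Set ℂ} (hs : s.Finite) {ε : ℝ}
    (h : ∀ μ ∈ s, μ.re < -ε) (a : ℝ) : ∃ ε' > ε, ε' ≠ a ∧ ∀ μ ∈ s, μ.re < -ε' := by
  have hlt : ∀ᶠ ε' in 𝓝 ε, ∀ μ ∈ s, μ.re < -ε' :=
    (Filter.eventually_all_finite hs).2 fun μ hμ ↦
      continuous_neg.continuousAt.eventually_const_lt (h μ hμ)
  obtain ⟨b, hb, hεb⟩ := mem_nhdsGT_iff_exists_Ioo_subset.1 (nhdsWithin_le_nhds (s := Ioi ε) hlt)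
  obtain ⟨ε', hε', hne⟩ := ((Ioo_infinite hb).sdiff (finite_singleton a)).nonempty
  exact ⟨ε', hε'.1, hne, hεb hε'⟩

/-- The state transition matrix `S(t; r)` of the linear QSA process, for `a = I + A`. It is defined
in any real topological algebra, so as to apply to matrices and to operators alike. -/
noncomputable def stateTransition {𝔸 : Type*} [Ring 𝔸] [Algebra ℝ 𝔸] [TopologicalSpace 𝔸]
    [IsTopologicalRing 𝔸] (a : 𝔸) (t r : ℝ) : 𝔸 :=
  NormedSpace.exp (Real.log ((1 + t) / (1 + r)) • a)

section

variable {𝔸 : Type*} [NormedRing 𝔸] [NormedAlgebra ℝ 𝔸] {a : 𝔸} {K ε r t : ℝ}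

theorem stateTransition_self (ht : 1 + t ≠ 0) : stateTransition a t t = 1 := by
  simp [stateTransition, div_self ht]

theorem norm_stateTransition_le
    (ha : ∀ s : ℝ, 0 ≤ s → ‖NormedSpace.exp (s • a)‖ ≤ K * Real.exp (-ε * s))
    (hr : 0 ≤ r) (hrt : r ≤ t) : ‖stateTransition a t r‖ ≤ K * ((1 + t) ^ (-ε) * (1 + r) ^ ε) := by
  have hr1 : 0 < 1 + r := by linarith
  have ht1 : 0 < 1 + t := by linarith
  refine (ha _ (Real.log_nonneg ?_)).trans_eq ?_
  · rw [one_le_div hr1]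
    gcongr
  · rw [Real.rpow_def_of_pos ht1, Real.rpow_def_of_pos hr1, ← Real.exp_add,
      Real.log_div ht1.ne' hr1.ne']
    ring_nf

theorem hasDerivAt_stateTransition [CompleteSpace 𝔸] (ht : 1 + t ≠ 0) (hr : 1 + r ≠ 0) :
    HasDerivAt (stateTransition a t) (-(1 + r)⁻¹ • (stateTransition a t r * a)) r := by
  have hlog : HasDerivAt (fun r ↦ Real.log ((1 + t) / (1 + r))) (-(1 + r)⁻¹) r := by
    have := ((((hasDerivAt_id r).const_add 1).fun_inv hr).const_mul (1 + t)).log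
      (mul_ne_zero ht (inv_ne_zero hr))
    simp only [id, ← div_eq_mul_inv] at this
    refine this.congr_deriv ?_
    field_simp
  exact (hasDerivAt_exp_smul_const a _).scomp r hlog

end

theorem hasDerivAt_one_add_rpow_sub_one_div {ε r : ℝ} (hε : ε ≠ 1) (hr : 1 + r ≠ 0) :
    HasDerivAt (fun r : ℝ ↦ ((1 + r) ^ (ε - 1) - 1) / (ε - 1)) ((1 + r) ^ (ε - 2)) r := by
  have h := ((((hasDerivAt_id r).const_add 1).rpow_const (p := ε - 1) (Or.inl hr)).sub_const
    1).div_const (ε - 1)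
  refine h.congr_deriv ?_
  rw [one_mul, mul_div_cancel_left₀ _ (sub_ne_zero.2 hε)]
  norm_num [sub_sub]

theorem rpow_neg_mul_rpow_sub_one_div_le {ε x : ℝ} (hε : ε ≠ 1) (hx : 1 ≤ x) :
    x ^ (-ε) * ((x ^ (ε - 1) - 1) / (ε - 1)) ≤ x ^ (-min ε 1) / |ε - 1| := by
  have hx0 : 0 < x := by linarith
  have hmul : x ^ (-ε) * (x ^ (ε - 1) - 1) = x ^ (-1 : ℝ) - x ^ (-ε) := by
    rw [mul_sub, ← Real.rpow_add hx0, mul_one]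
    ring_nf
  rw [← mul_div_assoc, hmul]
  obtain h | h := hε.lt_or_gt
  · rw [min_eq_left h.le, abs_of_neg (sub_neg.2 h), ← neg_div_neg_eq, neg_sub]
    gcongr
    · linarith
    · linarith [Real.rpow_nonneg hx0.le (-1)]
  · rw [min_eq_right h.le, abs_of_pos (sub_pos.2 h)]
    gcongr
    linarith [Real.rpow_nonneg hx0.le (-ε)]

section

variable {E : Type*} [NormedAddCommGroup E] [NormedSpace ℝ E] {L : E →L[ℝ] E} {K G M ε t : ℝ}

theorem hasDerivWithinAt_stateTransition_apply [CompleteSpace E] {p : ℝ → E} {g : E}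
    {s : Set ℝ} {r : ℝ} (ht : 1 + t ≠ 0) (hr : 1 + r ≠ 0)
    (hp : HasDerivWithinAt p ((1 + r)⁻¹ • L (p r) + g) s r) :
    HasDerivWithinAt (fun r ↦ stateTransition L t r (p r)) (stateTransition L t r g) s r := by
  have hS : HasDerivWithinAt (stateTransition L t) (-(1 + r)⁻¹ • (stateTransition L t r * L)) s r :=
    (hasDerivAt_stateTransition ht hr).hasDerivWithinAt
  exact (hS.clm_apply hp).congr_deriv (by simp)

theorem norm_sub_stateTransition_apply_le [CompleteSpace E] (hε : ε ≠ 1)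
    (hL : ∀ s : ℝ, 0 ≤ s → ‖NormedSpace.exp (s • L)‖ ≤ K * Real.exp (-ε * s)) {p w : ℝ → E}
    (hp : ∀ r, 0 ≤ r →
      HasDerivWithinAt p ((1 + r)⁻¹ • L (p r) + ((1 + r) ^ 2)⁻¹ • w r) (Ici 0) r)
    (hw : ∀ r, 0 ≤ r → ‖w r‖ ≤ G) (ht : 0 ≤ t) :
    ‖p t - stateTransition L t 0 (p 0)‖ ≤ K * G / |ε - 1| * (1 + t) ^ (-min ε 1) := by
  have hK : 0 ≤ K := by simpa using (norm_nonneg _).trans (hL 0 le_rfl)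
  have hG : 0 ≤ G := (norm_nonneg _).trans (hw 0 le_rfl)
  set B : ℝ → ℝ := fun r ↦ K * G * (1 + t) ^ (-ε) * (((1 + r) ^ (ε - 1) - 1) / (ε - 1))
  have hf (r : ℝ) (hr : 0 ≤ r) :
      HasDerivWithinAt (fun r ↦ stateTransition L t r (p r) - stateTransition L t 0 (p 0))
        (stateTransition L t r (((1 + r) ^ 2)⁻¹ • w r)) (Ici 0) r :=
    (hasDerivWithinAt_stateTransition_apply (by positivity) (by positivity) (hp r hr)).sub_const _
  have hB (r : ℝ) (hr : 0 ≤ r) :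
      HasDerivAt B (K * G * (1 + t) ^ (-ε) * (1 + r) ^ (ε - 2)) r :=
    (hasDerivAt_one_add_rpow_sub_one_div hε (by positivity)).const_mul _
  have hbound (r : ℝ) (hr : r ∈ Ico 0 t) : ‖stateTransition L t r (((1 + r) ^ 2)⁻¹ • w r)‖ ≤
      K * G * (1 + t) ^ (-ε) * (1 + r) ^ (ε - 2) := by
    have hr1 : 0 < 1 + r := by linarith [hr.1]
    calc ‖stateTransition L t r (((1 + r) ^ 2)⁻¹ • w r)‖
        ≤ K * ((1 + t) ^ (-ε) * (1 + r) ^ ε) * (((1 + r) ^ 2)⁻¹ * G) := by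
          refine ContinuousLinearMap.le_of_opNorm_le_of_le _
            (norm_stateTransition_le hL hr.1 hr.2.le) ?_
          rw [norm_smul, Real.norm_of_nonneg (by positivity)]
          gcongr
          exact hw r hr.1
      _ = K * G * (1 + t) ^ (-ε) * (1 + r) ^ (ε - 2) := by
          rw [Real.rpow_sub hr1, Real.rpow_two]
          ring
  have hfB := image_norm_le_of_norm_deriv_right_le_deriv_boundary'
    (fun r hr ↦ (hf r hr.1).continuousWithinAt.mono Icc_subset_Ici_self)
    (fun r hr ↦ (hf r hr.1).mono (Ici_subset_Ici.2 hr.1)) (by simp [B])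
    (fun r hr ↦ (hB r hr.1).continuousAt.continuousWithinAt)
    (fun r hr ↦ (hB r hr.1).hasDerivWithinAt) hbound (right_mem_Icc.2 ht)
  calc ‖p t - stateTransition L t 0 (p 0)‖ ≤ B t := by
        simpa [stateTransition_self (show 1 + t ≠ 0 by positivity)] using hfB
    _ = K * G * ((1 + t) ^ (-ε) * (((1 + t) ^ (ε - 1) - 1) / (ε - 1))) := mul_assoc _ _ _
    _ ≤ K * G * ((1 + t) ^ (-min ε 1) / |ε - 1|) := by
        gcongr
        exact rpow_neg_mul_rpow_sub_one_div_le hε (le_add_of_nonneg_right ht)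
    _ = K * G / |ε - 1| * (1 + t) ^ (-min ε 1) := by ring

/-- `θ` is a linear QSA process with matrix `A` and noise `ξ`. Only times `t ≥ 0` count, so the
derivative at `0` is one-sided. -/
def IsLinearQSA (A : E →L[ℝ] E) (ξ θ : ℝ → E) : Prop :=
  ∀ t, 0 ≤ t → HasDerivWithinAt θ ((1 / (t + 1)) • (A (θ t) + ξ t)) (Ici 0) t

/-- The rescaled process `(1 + t) θ(t)` minus the two leading noise terms, those produced by
integrating `ξ` and then `(1 + t)⁻¹ L ξ^I` by parts. With `L = I + A` its equation of motion
involves the noise only through `(1 + t)⁻² ξ^II`. -/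
noncomputable def noiseCorrectedQSA (L : E →L[ℝ] E) (ξI ξII θ : ℝ → E) (t : ℝ) : E :=
  (1 + t) • θ t - ξI t - (1 + t)⁻¹ • L (ξII t)

variable {A : E →L[ℝ] E} {ξ ξI ξII θ : ℝ → E}

theorem IsLinearQSA.hasDerivWithinAt_noiseCorrectedQSA (hθ : IsLinearQSA A ξ θ) (ht : 0 ≤ t)
    (hξI : HasDerivWithinAt ξI (ξ t) (Ici 0) t) (hξII : HasDerivWithinAt ξII (ξI t) (Ici 0) t) :
    HasDerivWithinAt (noiseCorrectedQSA (1 + A) ξI ξII θ)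
      ((1 + t)⁻¹ • (1 + A) (noiseCorrectedQSA (1 + A) ξI ξII θ t) +
        ((1 + t) ^ 2)⁻¹ • ((1 + A) (ξII t) + (1 + A) ((1 + A) (ξII t)))) (Ici 0) t := by
  have ht1 : 1 + t ≠ 0 := by positivity
  have hid : HasDerivWithinAt (fun t : ℝ ↦ 1 + t) 1 (Ici 0) t :=
    ((hasDerivAt_id t).const_add 1).hasDerivWithinAt
  refine (((hid.smul (hθ t ht)).sub hξI).sub ((hid.fun_inv ht1).smul
    ((1 + A).hasFDerivAt.comp_hasDerivWithinAt t hξII))).congr_deriv ?_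
  generalize hL : 1 + A = L
  obtain rfl : A = L - 1 := by rw [← hL]; abel
  simp only [noiseCorrectedQSA, map_sub, map_smul, sub_apply, one_apply_eq_self,
    Function.comp_apply]
  match_scalars <;> field_simp <;> ring

theorem IsLinearQSA.norm_sub_le [CompleteSpace E] (hε : ε ≠ 1)
    (hA : ∀ s : ℝ, 0 ≤ s → ‖NormedSpace.exp (s • (1 + A))‖ ≤ K * Real.exp (-ε * s))
    (hξI : ∀ t, 0 ≤ t → HasDerivWithinAt ξI (ξ t) (Ici 0) t)
    (hξII : ∀ t, 0 ≤ t → HasDerivWithinAt ξII (ξI t) (Ici 0) t) (hξI0 : ξI 0 = 0)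
    (hξII0 : ξII 0 = 0) (hM : ∀ t, 0 ≤ t → ‖ξII t‖ ≤ M) (hθ : IsLinearQSA A ξ θ) (ht : 0 ≤ t) :
    ‖θ t - (1 / (t + 1)) • (ξI t + stateTransition (1 + A) t 0 (θ 0))‖ ≤
      (K * (‖1 + A‖ * M + ‖1 + A‖ * (‖1 + A‖ * M)) / |ε - 1| + ‖1 + A‖ * M) /
        (1 + t) ^ (1 + min ε 1) := by
  have ht1 : 0 < 1 + t := by positivity
  have hLM (r : ℝ) (hr : 0 ≤ r) : ‖(1 + A) (ξII r)‖ ≤ ‖1 + A‖ * M :=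
    (1 + A).le_opNorm_of_le (hM r hr)
  have hp := norm_sub_stateTransition_apply_le hε hA
    (fun r hr ↦ hθ.hasDerivWithinAt_noiseCorrectedQSA hr (hξI r hr) (hξII r hr))
    (fun r hr ↦ norm_add_le_of_le (hLM r hr) ((1 + A).le_opNorm_of_le (hLM r hr))) ht
  have hp0 : noiseCorrectedQSA (1 + A) ξI ξII θ 0 = θ 0 := by simp [noiseCorrectedQSA, hξI0, hξII0]
  rw [hp0] at hp
  have hrem : ‖(1 + t)⁻¹ • (1 + A) (ξII t)‖ ≤ ‖1 + A‖ * M * (1 + t) ^ (-min ε 1) := by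
    have hinv : (1 + t)⁻¹ ≤ (1 + t) ^ (-min ε 1) := by
      rw [← Real.rpow_neg_one]
      exact Real.rpow_le_rpow_of_exponent_le (by linarith) (neg_le_neg (min_le_right _ _))
    rw [norm_smul, Real.norm_of_nonneg (by positivity), mul_comm]
    gcongr
    exacts [(norm_nonneg _).trans (hLM t ht), hLM t ht]
  have herr : θ t - (1 / (t + 1)) • (ξI t + stateTransition (1 + A) t 0 (θ 0)) =
      (1 + t)⁻¹ • ((noiseCorrectedQSA (1 + A) ξI ξII θ t - stateTransition (1 + A) t 0 (θ 0)) +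
        (1 + t)⁻¹ • (1 + A) (ξII t)) := by
    simp only [noiseCorrectedQSA]
    match_scalars <;> field_simp <;> ring
  calc ‖θ t - (1 / (t + 1)) • (ξI t + stateTransition (1 + A) t 0 (θ 0))‖
      ≤ (1 + t)⁻¹ * (K * (‖1 + A‖ * M + ‖1 + A‖ * (‖1 + A‖ * M)) / |ε - 1| *
          (1 + t) ^ (-min ε 1) + ‖1 + A‖ * M * (1 + t) ^ (-min ε 1)) := by
        rw [herr, norm_smul, Real.norm_of_nonneg (by positivity)]
        gcongr
        exact norm_add_le_of_le hp hrem
    _ = _ := by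
        rw [Real.rpow_add ht1, Real.rpow_one, Real.rpow_neg ht1.le]
        field_simp

end

theorem hasDerivWithinAt_Ici_integral {E : Type*} [NormedAddCommGroup E] [NormedSpace ℝ E]
    [CompleteSpace E] {f : ℝ → E} {a t : ℝ}
    (hf : ContinuousOn f (Ici a)) (ht : a ≤ t) :
    HasDerivWithinAt (fun u ↦ ∫ r in a..u, f r) (f t) (Ici a) t := by
  have htlt : t < t + 1 := lt_add_one t
  have : Fact (t ∈ Icc a (t + 1)) := ⟨ht, htlt.le⟩
  have hfI : ContinuousOn f (Icc a (t + 1)) := hf.mono Icc_subset_Ici_self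
  have h : HasDerivWithinAt (fun u ↦ ∫ r in a..u, f r) (f t) (Icc a (t + 1)) t :=
    intervalIntegral.integral_hasDerivWithinAt_right
      ((hfI.mono (Icc_subset_Icc_right htlt.le)).intervalIntegrable_of_Icc ht)
      (hfI.stronglyMeasurableAtFilter_nhdsWithin measurableSet_Icc t) (hfI t this.out)
  refine h.mono_of_mem_nhdsWithin ?_
  rw [← Ici_inter_Iic]
  exact Filter.inter_mem self_mem_nhdsWithin (nhdsWithin_le_nhds (Iic_mem_nhds htlt))

section

variable {n : Type*} [Fintype n] [DecidableEq n]

theorem toEuclideanCLM_stateTransition (B : Matrix n n ℝ) (t r : ℝ) :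
    Matrix.toEuclideanCLM (𝕜 := ℝ) (stateTransition B t r) =
      stateTransition (Matrix.toEuclideanCLM (𝕜 := ℝ) B) t r := by
  rw [stateTransition, stateTransition, toEuclideanCLM_exp, map_smul]

theorem linear_QSA_coupling_representation_general {A : Matrix n n ℝ} {ε : ℝ}
    (heig : ∀ μ ∈ spectrum ℂ ((1 + A).map (algebraMap ℝ ℂ)), μ.re < -ε)
    {ξ ξI ξII : ℝ → EuclideanSpace ℝ n} (hξ : ContinuousOn ξ (Ici 0))
    (hξI : ∀ t, ξI t = ∫ r in (0 : ℝ)..t, ξ r) (hξII : ∀ t, ξII t = ∫ r in (0 : ℝ)..t, ξI r)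
    (hbdd : ∃ M : ℝ, ∀ t : ℝ, 0 ≤ t → ‖ξII t‖ ≤ M) :
    ∃ C : ℝ, ∀ θ : ℝ → EuclideanSpace ℝ n,
      IsLinearQSA (Matrix.toEuclideanCLM (𝕜 := ℝ) A) ξ θ → ∀ t : ℝ, 0 ≤ t →
        ‖θ t - (1 / (t + 1)) •
            (ξI t + Matrix.toEuclideanCLM (𝕜 := ℝ) (stateTransition (1 + A) t 0) (θ 0))‖ ≤
          C / (1 + t) ^ (1 + min ε 1) := by
  obtain ⟨ε', hεε', hε'1, heig'⟩ :=
    exists_gt_ne_forall_re_lt_neg (Matrix.finite_spectrum _) heig 1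
  obtain ⟨K, hK⟩ := exists_norm_exp_smul_toEuclideanCLM_le heig'
  obtain ⟨M, hM⟩ := hbdd
  rw [map_add, map_one] at hK
  have hξI' (t : ℝ) (ht : 0 ≤ t) : HasDerivWithinAt ξI (ξ t) (Ici 0) t := by
    rw [funext hξI]
    exact hasDerivWithinAt_Ici_integral hξ ht
  have hξII' (t : ℝ) (ht : 0 ≤ t) : HasDerivWithinAt ξII (ξI t) (Ici 0) t := by
    rw [funext hξII]
    exact hasDerivWithinAt_Ici_integral (fun r hr ↦ (hξI' r hr).continuousWithinAt) ht
  set L := 1 + Matrix.toEuclideanCLM (𝕜 := ℝ) A with hL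
  refine ⟨K * (‖L‖ * M + ‖L‖ * (‖L‖ * M)) / |ε' - 1| + ‖L‖ * M, fun θ hθ t ht ↦ ?_⟩
  have h := hθ.norm_sub_le hε'1 hK hξI' hξII' (by simp [hξI]) (by simp [hξII]) hM ht
  rw [toEuclideanCLM_stateTransition, map_add, map_one, ← hL, le_div_iff₀ (by positivity)]
  refine le_trans ?_ ((le_div_iff₀ (by positivity)).1 h)
  gcongr
  exact le_add_of_nonneg_right ht

end

/-- Coupling representation for linear QSA (Theorem 2, equation (26)):
if every eigenvalue of `Ā = I + A` has real part `< -ε_S` (`0 < ε_S`, `ε_S ≠ 1`,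
`δ_S = min(ε_S,1)`) and `ξ, ξ^I, ξ^II` are bounded on `[0,∞)`, then there is a constant
`C < ∞`, independent of the initial condition, such that every linear QSA process satisfies
`‖θ(t) - (1/(t+1))(ξ^I(t) + S(t;0)θ(0))‖ ≤ C/(1+t)^{1+δ_S}` for all `t ≥ 0`. -/
theorem linear_QSA_coupling_representation
    (d : ℕ) (A Abar : Matrix (Fin d) (Fin d) ℝ) (hAbar : Abar = 1 + A)
    (S : ℝ → ℝ → Matrix (Fin d) (Fin d) ℝ)
    (hS : ∀ t r, S t r = NormedSpace.exp (Real.log ((1 + t) / (1 + r)) • Abar))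
    (εS : ℝ) (hεS : 0 < εS) (hεS1 : εS ≠ 1) (δS : ℝ) (hδS : δS = min εS 1)
    (heig : ∀ μ ∈ spectrum ℂ (Abar.map (Complex.ofReal : ℝ → ℂ)), μ.re < -εS)
    (ξ : ℝ → EuclideanSpace ℝ (Fin d)) (hξ : ContinuousOn ξ (Set.Ici 0))
    (ξI ξII : ℝ → EuclideanSpace ℝ (Fin d))
    (hξI : ∀ t, ξI t = ∫ r in (0:ℝ)..t, ξ r)
    (hξII : ∀ t, ξII t = ∫ r in (0:ℝ)..t, ξI r)
    (hbdd : ∃ M : ℝ, ∀ t : ℝ, 0 ≤ t → ‖ξ t‖ ≤ M ∧ ‖ξI t‖ ≤ M ∧ ‖ξII t‖ ≤ M) :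
    ∃ C : ℝ, ∀ θ : ℝ → EuclideanSpace ℝ (Fin d),
      (∀ t : ℝ, 0 ≤ t →
        HasDerivAt θ ((1 / (t + 1)) • (Matrix.toEuclideanLin A (θ t) + ξ t)) t) →
      ∀ t : ℝ, 0 ≤ t →
        ‖θ t - (1 / (t + 1)) • (ξI t + Matrix.toEuclideanLin (S t 0) (θ 0))‖
          ≤ C / (1 + t) ^ (1 + δS) := by
  obtain ⟨rfl, rfl⟩ : S = stateTransition Abar ∧ δS = min εS 1 := ⟨funext₂ hS, hδS⟩
  subst hAbar
  obtain ⟨C, hC⟩ := linear_QSA_coupling_representation_general heig hξ hξI hξII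
    (hbdd.imp fun _ hM t ht ↦ (hM t ht).2.2)
  exact ⟨C, fun θ hθ ↦ hC θ fun t ht ↦ (hθ t ht).hasDerivWithinAt⟩
end

section
/- Decay bound on the state transition matrix (Lemma 2, final assertion). Suppose every eigenvalue λ of Ā = I + A satisfies Re(λ) < −ε_S for some ε_S > 0. Then there exists b_S < ∞ such that for all 0 ≤ r ≤ t: ‖S(t;r)‖₂ ≤ b_S·((1+t)/(1+r))^{−ε_S}, where ‖·‖₂ denotes the operator norm (maximal singular value). -/
/-!
In a complex Banach algebra the spectrum of `exp a` is the image under `exp` of the spectrum of `a`,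
so if the spectrum of `a` lies in the half-plane `Re μ < r`, then `exp a` has spectral radius less
than `exp r`. By Gelfand's formula `‖exp (n a)‖ = ‖(exp a) ^ n‖` is then `O(exp (r n))`, and the
fractional part of a real time `s ≥ 0` costs only a constant factor. Apply this to the
complexification of `Ā`, whose exponential dominates that of `Ā` in the `ℓ²` operator norm, at time
`s = log ((1 + t) / (1 + r))`.
-/

open Filter NormedSpace
open scoped NNReal

lemma isUnit_coe_centralizer_iff {R A : Type*} [CommSemiring R] [Semiring A] [Algebra R A]
    {s : Set A} {b : Subalgebra.centralizer R s} : IsUnit (b : A) ↔ IsUnit b := by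
  refine ⟨fun ⟨u, hu⟩ ↦ ?_, fun h ↦ h.map (Subalgebra.centralizer R s).val⟩
  have inv_mem : (↑u⁻¹ : A) ∈ Subalgebra.centralizer R s := fun x hx ↦
    Commute.units_inv_right (show Commute x u from hu ▸ b.2 x hx)
  exact ⟨⟨b, ⟨_, inv_mem⟩, Subtype.ext (by simp [← hu]), Subtype.ext (by simp [← hu])⟩, rfl⟩

lemma spectrum_coe_centralizer {R A : Type*} [CommRing R] [Ring A] [Algebra R A] {s : Set A}
    (b : Subalgebra.centralizer R s) : spectrum R (b : A) = spectrum R b := by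
  ext μ
  rw [spectrum.mem_iff, spectrum.mem_iff, ← isUnit_coe_centralizer_iff]
  rfl

section BanachAlgebra

lemma spectrum_exp_of_comm {A : Type*} [NormedCommRing A] [NormedAlgebra ℂ A] [CompleteSpace A]
    (a : A) : spectrum ℂ (exp a) = Complex.exp '' spectrum ℂ a := by
  let : NormedAlgebra ℚ A := .restrictScalars ℚ ℂ A
  have map_exp_apply (φ : WeakDual.characterSpace ℂ A) : φ (exp a) = Complex.exp (φ a) := by
    rw [Complex.exp_eq_exp_ℂ]
    exact map_exp φ (map_continuous φ) a
  ext z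
  simp only [Set.mem_image, WeakDual.CharacterSpace.mem_spectrum_iff_exists, map_exp_apply,
    exists_exists_eq_and]

variable {A : Type*} [NormedRing A] [NormedAlgebra ℂ A] [CompleteSpace A]

/- The double centralizer of `a` is a commutative Banach algebra containing `a`, and spectra
computed in it agree with those computed in `A`. -/
theorem spectrum_exp (a : A) : spectrum ℂ (exp a) = Complex.exp '' spectrum ℂ a := by
  let B := Subalgebra.centralizer ℂ (Set.centralizer {a})
  have hB : IsClosed (B : Set A) := Set.isClosed_centralizer _
  have : CompleteSpace B := hB.completeSpace_coe
  let : NormedCommRing B :=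
    { (inferInstance : NormedRing B) with
      mul_comm := fun x y ↦ Subtype.ext <|
        Set.centralizer_centralizer_comm_of_comm (S := {a}) (by simp) x x.2 y y.2 }
  let : NormedAlgebra ℚ B := .restrictScalars ℚ ℂ B
  let : NormedAlgebra ℚ A := .restrictScalars ℚ ℂ A
  let b : B := ⟨a, Set.subset_centralizer_centralizer rfl⟩
  have coe_exp : exp a = (exp b : B) := (map_exp B.val continuous_subtype_val b).symm
  rw [coe_exp, spectrum_coe_centralizer, spectrum_exp_of_comm, ← spectrum_coe_centralizer]

lemma spectralRadius_exp_lt {a : A} {r : ℝ} (h : ∀ μ ∈ spectrum ℂ a, μ.re < r) :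
    spectralRadius ℂ (exp a) < (Real.exp r).toNNReal := by
  rcases subsingleton_or_nontrivial A with _ | _
  · simp [Real.exp_pos]
  · refine spectrum.spectralRadius_lt_of_forall_lt _ fun z hz ↦ ?_
    rw [spectrum_exp] at hz
    obtain ⟨μ, hμ, rfl⟩ := hz
    rw [Real.lt_toNNReal_iff_coe_lt, coe_nnnorm, Complex.norm_exp]
    exact Real.exp_lt_exp.2 (h μ hμ)

lemma exists_norm_pow_le_of_spectralRadius_lt {a : A} {ρ : ℝ≥0} (h : spectralRadius ℂ a < ρ) :
    ∃ C, ∀ n : ℕ, ‖a ^ n‖ ≤ C * ρ ^ n := by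
  have hρ : (ρ : ℝ) ≠ 0 := by simpa using (zero_le.trans_lt h).ne'
  have eventually_le : ∀ᶠ n : ℕ in atTop, ‖a ^ n‖ ≤ 1 * ‖(ρ : ℝ) ^ n‖ := by
    have gelfand := spectrum.pow_nnnorm_pow_one_div_tendsto_nhds_spectralRadius a
    filter_upwards [gelfand.eventually_lt_const h, eventually_gt_atTop 0] with n hn hn0
    rw [one_div, ENNReal.rpow_inv_lt_iff (by positivity), ENNReal.rpow_natCast] at hn
    simpa using mod_cast hn.le
  obtain ⟨C, hC⟩ := (Asymptotics.isBigO_nat_atTop_iff fun n hn ↦ absurd hn (pow_ne_zero n hρ)).1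
    (Asymptotics.IsBigO.of_bound 1 eventually_le)
  exact ⟨C, fun n ↦ by simpa using hC n⟩

theorem exists_norm_exp_smul_le_s5 {a : A} {r : ℝ} (h : ∀ μ ∈ spectrum ℂ a, μ.re < r) :
    ∃ C, ∀ s : ℝ, 0 ≤ s → ‖exp (s • a)‖ ≤ C * Real.exp (r * s) := by
  let : NormedAlgebra ℚ A := .restrictScalars ℚ ℂ A
  obtain ⟨C, hC⟩ := exists_norm_pow_le_of_spectralRadius_lt (spectralRadius_exp_lt h)
  have continuous_exp_smul : Continuous fun τ : ℝ ↦ Real.exp (-(r * τ)) • exp (τ • a) := by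
    fun_prop
  obtain ⟨D, hD⟩ := (isCompact_Icc (a := 0) (b := 1)).exists_bound_of_continuousOn
    continuous_exp_smul.continuousOn
  refine ⟨C * D, fun s hs ↦ ?_⟩
  obtain ⟨n, τ, hτ, hsplit⟩ : ∃ (n : ℕ) (τ : ℝ), τ ∈ Set.Icc 0 1 ∧ s = n + τ :=
    ⟨⌊s⌋₊, s - ⌊s⌋₊, ⟨by linarith [Nat.floor_le hs], by linarith [Nat.lt_floor_add_one s]⟩, by ring⟩
  have norm_exp_natCast : ‖exp ((n : ℝ) • a)‖ ≤ C * Real.exp (r * n) := by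
    rw [Nat.cast_smul_eq_nsmul, exp_nsmul, mul_comm r, Real.exp_nat_mul]
    simpa [Real.exp_nonneg] using hC n
  have norm_exp_fract : ‖exp (τ • a)‖ ≤ D * Real.exp (r * τ) := by
    rw [← div_le_iff₀ (Real.exp_pos _), div_eq_inv_mul, ← Real.exp_neg]
    simpa [norm_smul] using hD τ hτ
  calc ‖exp (s • a)‖ = ‖exp ((n : ℝ) • a) * exp (τ • a)‖ := by
        rw [← exp_add_of_commute (((Commute.refl a).smul_left _).smul_right _), ← add_smul,
          ← hsplit]
    _ ≤ (C * Real.exp (r * n)) * (D * Real.exp (r * τ)) :=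
        norm_mul_le_of_le norm_exp_natCast norm_exp_fract
    _ = C * D * Real.exp (r * s) := by
        rw [hsplit, mul_add, Real.exp_add]; ring

end BanachAlgebra

section RealMatrix

open scoped Matrix.Norms.L2Operator

lemma norm_toLp_ofReal_comp {ι : Type*} [Fintype ι] (v : ι → ℝ) :
    ‖WithLp.toLp 2 (Complex.ofReal ∘ v)‖ = ‖WithLp.toLp 2 v‖ := by
  simp [EuclideanSpace.norm_eq]

lemma l2_opNorm_le_l2_opNorm_map_ofReal {m n : Type*} [Fintype m] [Fintype n] [DecidableEq n]
    (M : Matrix m n ℝ) : ‖M‖ ≤ ‖M.map Complex.ofReal‖ := by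
  rw [Matrix.l2_opNorm_def]
  refine ContinuousLinearMap.opNorm_le_bound _ (norm_nonneg _) fun x ↦ ?_
  have map_mulVec : Complex.ofReal ∘ M.mulVec x.ofLp =
      (M.map Complex.ofReal).mulVec (Complex.ofReal ∘ x.ofLp) :=
    funext fun i ↦ Complex.ofRealHom.map_mulVec M x.ofLp i
  change ‖WithLp.toLp 2 (M.mulVec x.ofLp)‖ ≤ _ * ‖WithLp.toLp 2 x.ofLp‖
  rw [← norm_toLp_ofReal_comp, ← norm_toLp_ofReal_comp x.ofLp, map_mulVec]
  exact Matrix.l2_opNorm_mulVec (M.map Complex.ofReal) (WithLp.toLp 2 _)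

lemma map_ofReal_exp {n : Type*} [Fintype n] [DecidableEq n] (M : Matrix n n ℝ) :
    (exp M).map Complex.ofReal = exp (M.map Complex.ofReal) := by
  let : NormedAlgebra ℚ (Matrix n n ℝ) := .restrictScalars ℚ ℝ _
  exact map_exp (Complex.ofRealHom.mapMatrix (m := n))
    (continuous_id.matrix_map Complex.continuous_ofReal) M

lemma exists_l2_opNorm_exp_smul_le {n : Type*} [Fintype n] [DecidableEq n] {M : Matrix n n ℝ}
    {r : ℝ} (h : ∀ μ ∈ spectrum ℂ (M.map Complex.ofReal), μ.re < r) :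
    ∃ C, ∀ s : ℝ, 0 ≤ s → ‖exp (s • M)‖ ≤ C * Real.exp (r * s) := by
  obtain ⟨C, hC⟩ := exists_norm_exp_smul_le_s5 h
  refine ⟨C, fun s hs ↦ ?_⟩
  calc ‖exp (s • M)‖ ≤ ‖(exp (s • M)).map Complex.ofReal‖ := l2_opNorm_le_l2_opNorm_map_ofReal _
    _ = ‖exp (s • M.map Complex.ofReal)‖ := by
      rw [map_ofReal_exp, Matrix.map_smul _ s (fun x ↦ by simp)]
    _ ≤ C * Real.exp (r * s) := hC s hs

end RealMatrix

theorem state_transition_matrix_decay_general {n : Type*} [Fintype n] [DecidableEq n]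
    {M : Matrix n n ℝ} {ε : ℝ} (h : ∀ μ ∈ spectrum ℂ (M.map Complex.ofReal), μ.re < -ε) :
    ∃ b : ℝ, ∀ r t : ℝ, -1 < r → r ≤ t →
      ‖Matrix.toEuclideanCLM (𝕜 := ℝ) (exp (Real.log ((1 + t) / (1 + r)) • M))‖
        ≤ b * ((1 + t) / (1 + r)) ^ (-ε) := by
  obtain ⟨b, hb⟩ := exists_l2_opNorm_exp_smul_le h
  refine ⟨b, fun r t hr hrt ↦ ?_⟩
  have one_le_ratio : 1 ≤ (1 + t) / (1 + r) := by
    rw [one_le_div (by linarith)]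
    linarith
  rw [Matrix.l2_opNorm_toEuclideanCLM, Real.rpow_def_of_pos (by positivity), mul_comm (Real.log _)]
  exact hb _ (Real.log_nonneg one_le_ratio)

/-- Decay bound on the state transition matrix (Lemma 2, final assertion):
if every eigenvalue `λ` of `Ā = I + A` (viewed over `ℂ`) satisfies `Re λ < -ε_S` with `ε_S > 0`,
then there is `b_S < ∞` with `‖S(t;r)‖₂ ≤ b_S ((1+t)/(1+r))^{-ε_S}` for `0 ≤ r ≤ t`. -/
theorem state_transition_matrix_decay
    (d : ℕ) (A Abar : Matrix (Fin d) (Fin d) ℝ) (hAbar : Abar = 1 + A)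
    (S : ℝ → ℝ → Matrix (Fin d) (Fin d) ℝ)
    (hS : ∀ t r, S t r = NormedSpace.exp (Real.log ((1 + t) / (1 + r)) • Abar))
    (εS : ℝ) (hεS : 0 < εS)
    (heig : ∀ μ ∈ spectrum ℂ (Abar.map (Complex.ofReal : ℝ → ℂ)), μ.re < -εS) :
    ∃ bS : ℝ, ∀ r t : ℝ, 0 ≤ r → r ≤ t →
      ‖(Matrix.toEuclideanCLM (𝕜 := ℝ) (S t r) :
          EuclideanSpace ℝ (Fin d) →L[ℝ] EuclideanSpace ℝ (Fin d))‖
        ≤ bS * ((1 + t) / (1 + r)) ^ (-εS) := by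
  obtain ⟨b, hb⟩ := state_transition_matrix_decay_general heig
  exact ⟨b, fun r t hr hrt ↦ hS t r ▸ hb r t (by linarith) hrt⟩
end
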